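/- arXiv:2408.04148 — 4 statements merged into one kernel-verified Lean document; each statement's English description precedes it below -/
import Mathlib

section
/- Let f : [0,∞) → [0,∞) be a bounded function that is either antitone or continuous. Suppose that for every α > 0 and every ε > 0 there exists M > 0 such that ξ^(−α) ≤ ε·f(ξ) for all ξ ≥ M (i.e. limsup_{ξ→+∞} ξ^(−α)/f(ξ) = 0 for every α > 0). Then there exist a Borel probability measure μ on ℝ with μ(ℝ \ 𝕃) = 0 and constants C > 0, M' > 0 such that |μ̂(ξ)| ≤ C·f(|ξ|) for all ξ ∈ ℝ with |ξ| ≥ M'. -/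
open MeasureTheory Filter Set

/-- The Fourier transform of a measure on `ℝ`: `μ̂(ξ) = ∫ e^(−2πiξx) dμ(x)`. -/
noncomputable def fourierT (μ : Measure ℝ) (ξ : ℝ) : ℂ :=
  ∫ x, Complex.exp (((-2 * Real.pi * ξ * x : ℝ) : ℂ) * Complex.I) ∂μ

/-! Fix an exponent `k`. Averaging, over the primes `q ≤ L`, narrow tents placed next to the
fractions `a / q` gives a periodic density whose support satisfies the Liouville condition for `k`.
Its `m`-th Fourier coefficient only sees the primes dividing `m`. These are so few among the roughly
`L / log L` primes up to `L` that for `α < 1 / (2 * (k + 1))` the coefficients with `m ≠ 0` are at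
most `η * (1 + |m|) ^ (-α)`, with `η` as small as desired. Multiplying a measure with rapidly
decaying transform by this density therefore changes the transform by at most
`ε * (1 + |ξ|) ^ (-α)`.

Starting from a Gaussian, perform these perturbations for `k = 0, 1, 2, …`, with the `k`-th `ε` so
small that all changes together stay below `f`. The transforms converge uniformly, so by Lévy's
theorem the measures converge weakly. Each one is absolutely continuous with respect to its
predecessor, so the limit is carried by all the closed supports and hence by the Liouville numbers.
-/

/-! ### The Fourier series of a tent -/

lemma fourier_apply_add {T : ℝ} (n : ℤ) (x y : AddCircle T) :
    fourier n (x + y) = fourier n x * fourier n y := by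
  simp only [fourier_apply, smul_add, AddCircle.toCircle_add, Circle.coe_mul]

-- The term `n = 0` vanishes by the convention `1 / 0 = 0`.
lemma hasSum_one_div_sq_mul_fourier {s : ℝ} (hs : |s| ≤ 1) :
    HasSum (fun n : ℤ => 1 / (n : ℂ) ^ 2 * fourier n (s : UnitAddCircle))
      ((2 * Real.pi ^ 2 * (s ^ 2 - |s| + 6⁻¹) : ℝ) : ℂ) := by
  have on_unit_interval (x : ℝ) (hx : x ∈ Icc (0 : ℝ) 1) :
      HasSum (fun n : ℤ => 1 / (n : ℂ) ^ 2 * fourier n (x : UnitAddCircle))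
        ((2 * Real.pi ^ 2 * (x ^ 2 - x + 6⁻¹) : ℝ) : ℂ) := by
    convert hasSum_one_div_pow_mul_fourier_mul_bernoulliFun le_rfl hx using 1
    rw [bernoulliFun_two, mul_pow, Complex.I_sq, Nat.factorial_two]
    push_cast
    ring
  rcases abs_cases s with ⟨h, h'⟩ | ⟨h, h'⟩ <;> rw [h] at hs ⊢
  · exact on_unit_interval s ⟨h', hs⟩
  · convert on_unit_interval (s + 1) ⟨by linarith, by linarith⟩ using 3
    · rw [AddCircle.coe_add_period]
    · ring

/-- The tent function of half-width `δ` and mass one on the circle (for `0 < δ ≤ 1 / 2`). -/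
noncomputable def tent (δ : ℝ) (y : UnitAddCircle) : ℝ :=
  max 0 (δ - ‖y‖) / δ ^ 2

/-- The Fourier coefficients of the tent function of half-width `δ` (for `0 < δ ≤ 1 / 2`). -/
noncomputable def tentCoeff (δ : ℝ) (n : ℤ) : ℂ :=
  ((Real.sinc (Real.pi * n * δ) ^ 2 : ℝ) : ℂ)

lemma continuous_tent (δ : ℝ) : Continuous (tent δ) := by
  unfold tent
  fun_prop

lemma tent_nonneg (δ : ℝ) (y : UnitAddCircle) : 0 ≤ tent δ y := by
  unfold tent
  positivity

lemma norm_lt_of_tent_ne_zero {δ : ℝ} {y : UnitAddCircle} (h : tent δ y ≠ 0) : ‖y‖ < δ := by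
  contrapose! h
  rw [tent, max_eq_left (sub_nonpos.2 h), zero_div]

lemma max_zero_sub_abs {δ : ℝ} (hδ : 0 ≤ δ) (t : ℝ) :
    max 0 (δ - |t|) = (|t + δ| + |t - δ| - 2 * |t|) / 2 := by
  rcases abs_cases t with h₁ | h₁ <;> rcases abs_cases (t + δ) with h₂ | h₂ <;>
    rcases abs_cases (t - δ) with h₃ | h₃ <;> rcases max_cases 0 (δ - |t|) with h₄ | h₄ <;>
    linarith

lemma fourier_add_add_fourier_sub (n : ℤ) (x : UnitAddCircle) (δ : ℝ) :
    fourier n (x + (δ : UnitAddCircle)) + fourier n (x - (δ : UnitAddCircle)) =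
      ((2 - 4 * Real.sin (Real.pi * n * δ) ^ 2 : ℝ) : ℂ) * fourier n x := by
  have cos_double : 2 - 4 * Real.sin (Real.pi * n * δ) ^ 2 =
      2 * Real.cos (2 * (Real.pi * n * δ)) := by
    rw [Real.cos_two_mul, Real.cos_sq']
    ring
  have at_zero : fourier n (δ : UnitAddCircle) + fourier n ((-δ : ℝ) : UnitAddCircle) =
      ((2 - 4 * Real.sin (Real.pi * n * δ) ^ 2 : ℝ) : ℂ) := by
    rw [cos_double]
    push_cast
    rw [Complex.two_cos, fourier_coe_apply, fourier_coe_apply]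
    congr 2 <;> push_cast <;> ring
  rw [sub_eq_add_neg, ← AddCircle.coe_neg, fourier_apply_add, fourier_apply_add, ← mul_add,
    at_zero, mul_comm]

lemma hasSum_tent {δ : ℝ} (hδ : 0 < δ) (hδ' : δ ≤ 1 / 2) (y : UnitAddCircle) :
    HasSum (fun n => tentCoeff δ n * fourier n y) (tent δ y) := by
  obtain ⟨t, rfl, ht⟩ : ∃ t : ℝ, (t : UnitAddCircle) = y ∧ |t| ≤ 1 / 2 := by
    obtain ⟨x, rfl⟩ := QuotientAddGroup.mk_surjective y
    exact ⟨x - round x, by simp, abs_sub_round x⟩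
  have norm_t : ‖(t : UnitAddCircle)‖ = |t| :=
    (AddCircle.norm_coe_eq_abs_iff 1 one_ne_zero).2 (by simpa using ht)
  obtain ⟨ht₁, ht₂⟩ := abs_le.1 ht
  have at_t := hasSum_one_div_sq_mul_fourier (s := t) (by linarith)
  have at_add := hasSum_one_div_sq_mul_fourier (s := t + δ) (abs_le.2 ⟨by linarith, by linarith⟩)
  have at_sub := hasSum_one_div_sq_mul_fourier (s := t - δ) (abs_le.2 ⟨by linarith, by linarith⟩)
  have constant_term : HasSum (fun n : ℤ => if n = 0 then (1 : ℂ) else 0) 1 := hasSum_ite_eq 0 1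
  have hδ₀ : (δ : ℂ) ≠ 0 := mod_cast hδ.ne'
  have hπ₀ : (Real.pi : ℂ) ≠ 0 := mod_cast Real.pi_ne_zero
  -- The tent is a second difference of `|t|`, hence, up to the constant second difference of
  -- `t ^ 2`, of the periodic Bernoulli function `t ^ 2 - |t| + 1 / 6`.
  convert constant_term.add ((((at_t.mul_left 2).sub at_add).sub at_sub).div_const
    ((4 * Real.pi ^ 2 * δ ^ 2 : ℝ) : ℂ)) using 1
  · ext n
    rw [sub_sub, ← mul_add, AddCircle.coe_add, AddCircle.coe_sub, fourier_add_add_fourier_sub]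
    rcases eq_or_ne n 0 with rfl | hn
    · simp [tentCoeff]
    · have hn_sinc : Real.pi * n * δ ≠ 0 :=
        mul_ne_zero (mul_ne_zero Real.pi_ne_zero (mod_cast hn)) hδ.ne'
      have hn_complex : (n : ℂ) ≠ 0 := mod_cast hn
      rw [if_neg hn, tentCoeff, Real.sinc_of_ne_zero hn_sinc]
      push_cast
      field_simp
      ring
  · rw [tent, norm_t, max_zero_sub_abs hδ.le]
    push_cast
    field_simp
    ring

lemma abs_sinc_le_rpow {x s : ℝ} (hx : x ≠ 0) (hs₀ : 0 ≤ s) (hs₁ : s ≤ 1) :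
    |Real.sinc x| ≤ |x| ^ (-s) := by
  rcases le_total |x| 1 with h | h
  · exact (Real.abs_sinc_le_one x).trans
      (Real.one_le_rpow_of_pos_of_le_one_of_nonpos (abs_pos.2 hx) h (by linarith))
  · calc |Real.sinc x| = |Real.sin x| / |x| := by rw [Real.sinc_of_ne_zero hx, abs_div]
      _ ≤ |x| ^ (-1 : ℝ) := by
        rw [Real.rpow_neg_one, ← one_div]
        gcongr
        exact Real.abs_sin_le_one x
      _ ≤ |x| ^ (-s) := Real.rpow_le_rpow_of_exponent_le h (by linarith)

lemma sinc_sq_le_rpow {x δ t : ℝ} (hx : x ≠ 0) (hδ : 0 < δ) (ht₀ : 0 ≤ t) (ht₂ : t ≤ 2) :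
    Real.sinc (Real.pi * x * δ) ^ 2 ≤ (|x| * δ) ^ (-t) := by
  have hy : Real.pi * x * δ ≠ 0 := by positivity
  calc Real.sinc (Real.pi * x * δ) ^ 2 = |Real.sinc (Real.pi * x * δ)| ^ 2 := (sq_abs _).symm
    _ ≤ (|Real.pi * x * δ| ^ (-(t / 2))) ^ 2 := by
      gcongr
      exact abs_sinc_le_rpow hy (by linarith) (by linarith)
    _ = |Real.pi * x * δ| ^ (-t) := by
      rw [← Real.rpow_mul_natCast (abs_nonneg _)]
      congr 1
      push_cast
      ring
    _ ≤ (|x| * δ) ^ (-t) := by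
      have : 0 < |x| := abs_pos.2 hx
      refine Real.rpow_le_rpow_of_nonpos (by positivity) ?_ (by linarith)
      rw [mul_assoc, abs_mul, abs_mul, abs_of_pos hδ, abs_of_pos Real.pi_pos]
      exact le_mul_of_one_le_left (by positivity) (by linarith [Real.pi_gt_three])

/-! ### Densities concentrated near fractions with prime denominator -/

/-- The Fourier coefficients of `x ↦ F (q • x - s)`, where `b` are those of `F`. -/
noncomputable def dilateCoeff {T : ℝ} (b : ℤ → ℂ) (q : ℕ) (s : AddCircle T) (m : ℤ) : ℂ :=
  if (q : ℤ) ∣ m then b (m / q) * fourier (m / q) (-s) else 0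

lemma hasSum_dilateCoeff {T : ℝ} {b : ℤ → ℂ} {q : ℕ} (hq : q ≠ 0) {s x : AddCircle T} {z : ℂ}
    (h : HasSum (fun n => b n * fourier n (q • x - s)) z) :
    HasSum (fun m => dilateCoeff b q s m * fourier m x) z := by
  have hq' : (q : ℤ) ≠ 0 := mod_cast hq
  refine ((mul_right_injective₀ hq').hasSum_iff fun m hm => ?_).1 ?_
  · rw [dilateCoeff, if_neg fun ⟨n, hn⟩ => hm ⟨n, hn.symm⟩, zero_mul]
  · convert h using 2 with n
    have dilate : fourier ((q : ℤ) * n) x = fourier n (q • x) := by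
      rw [fourier_apply, fourier_apply, mul_comm, mul_smul, natCast_zsmul]
    rw [Function.comp_apply, dilateCoeff, if_pos (dvd_mul_right _ _),
      Int.mul_ediv_cancel_left _ hq', dilate, sub_eq_add_neg, fourier_apply_add]
    ring

lemma one_add_abs_le_two_mul_abs {m : ℤ} (hm : m ≠ 0) : 1 + |(m : ℝ)| ≤ 2 * |(m : ℝ)| := by
  have : (1 : ℝ) ≤ |(m : ℝ)| := mod_cast Int.one_le_abs hm
  linarith

lemma norm_dilateCoeff_tentCoeff_le {L q : ℕ} (hq : 0 < q) (hqL : q ≤ L) {m : ℤ} (hm : m ≠ 0)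
    {δ t : ℝ} (hδ : 0 < δ) (ht₀ : 0 ≤ t) (ht₂ : t ≤ 2) (s : UnitAddCircle) :
    ‖dilateCoeff (tentCoeff δ) q s m‖ ≤
      if (q : ℤ) ∣ m then (2 * L / δ) ^ t * (1 + |(m : ℝ)|) ^ (-t) else 0 := by
  have hL : 0 < L := hq.trans_le hqL
  rw [dilateCoeff]
  split_ifs with hdvd
  · obtain ⟨n, rfl⟩ := hdvd
    obtain ⟨hq₀, hn₀⟩ := mul_ne_zero_iff.1 hm
    have hn : (n : ℝ) ≠ 0 := mod_cast hn₀
    have hm' := one_add_abs_le_two_mul_abs hm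
    rw [Int.mul_ediv_cancel_left _ hq₀, norm_mul, fourier_apply, Circle.norm_coe, mul_one]
    calc ‖tentCoeff δ n‖ = Real.sinc (Real.pi * n * δ) ^ 2 := by
          rw [tentCoeff, Complex.norm_real, Real.norm_of_nonneg (sq_nonneg _)]
      _ ≤ (|(n : ℝ)| * δ) ^ (-t) := sinc_sq_le_rpow hn hδ ht₀ ht₂
      _ ≤ ((2 * L / δ)⁻¹ * (1 + |((q * n : ℤ) : ℝ)|)) ^ (-t) := by
        refine Real.rpow_le_rpow_of_nonpos (by positivity) ?_ (by linarith)
        rw [inv_div, div_mul_eq_mul_div, div_le_iff₀ (by positivity)]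
        calc δ * (1 + |((q * n : ℤ) : ℝ)|) ≤ δ * (2 * |((q * n : ℤ) : ℝ)|) := by gcongr
          _ = |(n : ℝ)| * δ * (2 * q) := by
            push_cast
            rw [abs_mul, Nat.abs_cast]
            ring
          _ ≤ |(n : ℝ)| * δ * (2 * L) := by gcongr
      _ = (2 * L / δ) ^ t * (1 + |((q * n : ℤ) : ℝ)|) ^ (-t) := by
        rw [Real.mul_rpow (by positivity) (by positivity), Real.inv_rpow (by positivity),
          Real.rpow_neg (by positivity), inv_inv]
  · rw [norm_zero]

/-- The average over the primes `q ≤ L` of the tents centred at the points with `q • x = 2 * δ`. The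
shift by `2 * δ` keeps the support away from the fractions `a / q` themselves, which are not
Liouville numbers. -/
noncomputable def primeAvg (L : ℕ) (δ : ℝ) (x : UnitAddCircle) : ℝ :=
  (∑ q ∈ L.primesLE, tent δ (q • x - ((2 * δ : ℝ) : UnitAddCircle))) / L.primesLE.card

/-- The Fourier coefficients of `primeAvg L δ`. -/
noncomputable def primeAvgCoeff (L : ℕ) (δ : ℝ) (m : ℤ) : ℂ :=
  (∑ q ∈ L.primesLE, dilateCoeff (tentCoeff δ) q ((2 * δ : ℝ) : UnitAddCircle) m) /
    L.primesLE.card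

lemma continuous_primeAvg (L : ℕ) (δ : ℝ) : Continuous (primeAvg L δ) :=
  (continuous_finsetSum _ fun _ _ =>
    (continuous_tent δ).comp ((continuous_nsmul _).sub continuous_const)).div_const _

lemma primeAvg_nonneg (L : ℕ) (δ : ℝ) (x : UnitAddCircle) : 0 ≤ primeAvg L δ x :=
  div_nonneg (Finset.sum_nonneg fun _ _ => tent_nonneg _ _) (Nat.cast_nonneg _)

lemma hasSum_primeAvgCoeff {δ : ℝ} (hδ : 0 < δ) (hδ' : δ ≤ 1 / 2) (L : ℕ) (x : UnitAddCircle) :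
    HasSum (fun m => primeAvgCoeff L δ m * fourier m x) (primeAvg L δ x) := by
  simp only [primeAvg, primeAvgCoeff, Complex.ofReal_div, Complex.ofReal_sum,
    Complex.ofReal_natCast, div_mul_eq_mul_div, Finset.sum_mul]
  exact (hasSum_sum fun q hq => hasSum_dilateCoeff (Nat.prime_of_mem_primesLE hq).ne_zero
    (hasSum_tent hδ hδ' _)).div_const _

lemma primeAvgCoeff_zero {L : ℕ} (hL : 2 ≤ L) (δ : ℝ) : primeAvgCoeff L δ 0 = 1 := by
  have card_ne_zero : (L.primesLE.card : ℂ) ≠ 0 :=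
    mod_cast Finset.card_ne_zero_of_mem (Nat.mem_primesLE.2 ⟨hL, Nat.prime_two⟩)
  have summand (q : ℕ) :
      dilateCoeff (tentCoeff δ) q ((2 * δ : ℝ) : UnitAddCircle) 0 = 1 := by
    simp [dilateCoeff, tentCoeff]
  simp only [primeAvgCoeff, summand, Finset.sum_const, nsmul_eq_mul, mul_one,
    div_self card_ne_zero]

lemma norm_primeAvgCoeff_le {m : ℤ} (hm : m ≠ 0) {δ t : ℝ} (hδ : 0 < δ) (ht₀ : 0 ≤ t)
    (ht₂ : t ≤ 2) (L : ℕ) :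
    ‖primeAvgCoeff L δ m‖ ≤ {q ∈ L.primesLE | q ∣ m.natAbs}.card *
      ((2 * L / δ) ^ t * (1 + |(m : ℝ)|) ^ (-t)) / L.primesLE.card := by
  rw [primeAvgCoeff, norm_div, Complex.norm_natCast]
  gcongr
  refine (norm_sum_le_of_le _ fun q hq => norm_dilateCoeff_tentCoeff_le
    (Nat.prime_of_mem_primesLE hq).pos (Nat.le_of_mem_primesLE hq) hm hδ ht₀ ht₂ _).trans_eq ?_
  simp_rw [Int.natCast_dvd]
  rw [← Finset.sum_filter, Finset.sum_const, nsmul_eq_mul]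

lemma norm_primeAvgCoeff_le_sq {L : ℕ} (hL : 2 ≤ L) {δ : ℝ} (hδ₀ : 0 < δ) (hδ₁ : δ ≤ 1) (m : ℤ) :
    ‖primeAvgCoeff L δ m‖ ≤ (2 * L / δ) ^ (2 : ℝ) * (1 + |(m : ℝ)|) ^ (-2 : ℝ) := by
  rcases eq_or_ne m 0 with rfl | hm
  · have one_le_scale : 1 ≤ 2 * L / δ := by
      rw [one_le_div hδ₀]
      have : (2 : ℝ) ≤ L := mod_cast hL
      linarith
    simpa [primeAvgCoeff_zero hL] using Real.one_le_rpow one_le_scale zero_le_two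
  · refine (norm_primeAvgCoeff_le hm hδ₀ zero_le_two le_rfl L).trans ?_
    rw [mul_div_right_comm]
    refine mul_le_of_le_one_left (by positivity) (div_le_one_of_le₀ ?_ (Nat.cast_nonneg _))
    exact_mod_cast Finset.card_filter_le _ _

lemma card_primeFactors_le_rpow {m : ℕ} (hm : m ≠ 0) {α : ℝ} (hα : 0 < α) :
    (m.primeFactors.card : ℝ) ≤ 2 / α * (m : ℝ) ^ α := by
  have two_pow_card_le : 2 ^ m.primeFactors.card ≤ m :=
    (Finset.pow_card_le_prod _ _ _ fun p hp => (Nat.prime_of_mem_primeFactors hp).two_le).trans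
      (Nat.le_of_dvd (Nat.pos_of_ne_zero hm) (Nat.prod_primeFactors_dvd m))
  have card_mul_log_two_le : (m.primeFactors.card : ℝ) * Real.log 2 ≤ Real.log m := by
    rw [← Real.log_pow]
    exact Real.log_le_log (by positivity) (mod_cast two_pow_card_le)
  calc (m.primeFactors.card : ℝ) ≤ 2 * (m.primeFactors.card * Real.log 2) := by
        nlinarith [Real.log_two_gt_d9, Nat.cast_nonneg (α := ℝ) m.primeFactors.card]
    _ ≤ 2 * ((m : ℝ) ^ α / α) := by
      gcongr
      exact card_mul_log_two_le.trans (Real.log_le_rpow_div (Nat.cast_nonneg _) hα)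
    _ = 2 / α * (m : ℝ) ^ α := by ring

lemma norm_primeAvgCoeff_le_rpow {m : ℤ} (hm : m ≠ 0) {δ α : ℝ} (hδ : 0 < δ) (hα₀ : 0 < α)
    (hα₁ : α ≤ 1) (L : ℕ) :
    ‖primeAvgCoeff L δ m‖ ≤
      2 / α * (2 * L / δ) ^ (2 * α) / L.primesLE.card * (1 + |(m : ℝ)|) ^ (-α) := by
  have card_le : ({q ∈ L.primesLE | q ∣ m.natAbs}.card : ℝ) ≤ 2 / α * (1 + |(m : ℝ)|) ^ α := by
    have subset_primeFactors : {q ∈ L.primesLE | q ∣ m.natAbs} ⊆ m.natAbs.primeFactors := by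
      intro q hq
      obtain ⟨hq, hdvd⟩ := Finset.mem_filter.1 hq
      exact Nat.mem_primeFactors.2
        ⟨Nat.prime_of_mem_primesLE hq, hdvd, Int.natAbs_ne_zero.2 hm⟩
    calc ({q ∈ L.primesLE | q ∣ m.natAbs}.card : ℝ) ≤ m.natAbs.primeFactors.card :=
          mod_cast Finset.card_le_card subset_primeFactors
      _ ≤ 2 / α * (m.natAbs : ℝ) ^ α := card_primeFactors_le_rpow (Int.natAbs_ne_zero.2 hm) hα₀
      _ ≤ 2 / α * (1 + |(m : ℝ)|) ^ α := by
        rw [Nat.cast_natAbs, Int.cast_abs]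
        gcongr
        linarith
  have rpow_split : (1 + |(m : ℝ)|) ^ (-α) =
      (1 + |(m : ℝ)|) ^ α * (1 + |(m : ℝ)|) ^ (-(2 * α)) := by
    rw [← Real.rpow_add (by positivity)]
    congr 1
    ring
  calc ‖primeAvgCoeff L δ m‖
      ≤ {q ∈ L.primesLE | q ∣ m.natAbs}.card *
          ((2 * L / δ) ^ (2 * α) * (1 + |(m : ℝ)|) ^ (-(2 * α))) / L.primesLE.card :=
        norm_primeAvgCoeff_le hm hδ (by linarith) (by linarith) L
    _ ≤ 2 / α * (1 + |(m : ℝ)|) ^ α *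
          ((2 * L / δ) ^ (2 * α) * (1 + |(m : ℝ)|) ^ (-(2 * α))) / L.primesLE.card := by gcongr
    _ = 2 / α * (2 * L / δ) ^ (2 * α) / L.primesLE.card * (1 + |(m : ℝ)|) ^ (-α) := by
      rw [rpow_split]
      ring

/-- The reals at distance between `δ / q` and `3 * δ / q` from a fraction with some prime
denominator `q ≤ L`. -/
def nearPrimeFractions (L : ℕ) (δ : ℝ) : Set ℝ :=
  ⋃ q ∈ L.primesLE, {x : ℝ | ‖q • (x : UnitAddCircle)‖ ∈ Icc δ (3 * δ)}

lemma isClosed_nearPrimeFractions (L : ℕ) (δ : ℝ) : IsClosed (nearPrimeFractions L δ) := by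
  refine isClosed_biUnion_finset fun q _ => isClosed_Icc.preimage ?_
  exact ((AddCircle.continuous_mk' 1).nsmul q).norm

lemma mem_nearPrimeFractions_of_primeAvg_ne_zero {L : ℕ} {δ x : ℝ} (hδ₀ : 0 ≤ δ)
    (hδ : δ ≤ 1 / 4) (hx : primeAvg L δ (x : UnitAddCircle) ≠ 0) : x ∈ nearPrimeFractions L δ := by
  obtain ⟨q, hq, hne⟩ := Finset.exists_ne_zero_of_sum_ne_zero (div_ne_zero_iff.1 hx).1
  have near_shift := norm_lt_of_tent_ne_zero hne
  have norm_shift : ‖((2 * δ : ℝ) : UnitAddCircle)‖ = 2 * δ := by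
    rw [(AddCircle.norm_coe_eq_abs_iff 1 one_ne_zero).2] <;>
      rw [abs_of_nonneg (by positivity)]
    rw [abs_one]
    linarith
  have lower := norm_sub_norm_le ((2 * δ : ℝ) : UnitAddCircle) (q • (x : UnitAddCircle))
  have upper := norm_sub_norm_le (q • (x : UnitAddCircle)) ((2 * δ : ℝ) : UnitAddCircle)
  rw [norm_sub_rev] at lower
  exact mem_biUnion hq ⟨by linarith, by linarith⟩

/-- The reals satisfying the Liouville condition for the single exponent `k`. -/
def liouvilleLevel (k : ℕ) : Set ℝ :=
  {x | ∃ a b : ℤ, 1 < b ∧ x ≠ a / b ∧ |x - a / b| < 1 / (b : ℝ) ^ k}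

lemma nearPrimeFractions_subset_liouvilleLevel {L k : ℕ} {δ : ℝ} (hδ : 0 < δ)
    (h : 3 * δ * L ^ k ≤ 1) : nearPrimeFractions L δ ⊆ liouvilleLevel k := by
  intro x hx
  obtain ⟨q, hq, hlower, hupper⟩ := mem_iUnion₂.1 hx
  have hq_one : (1 : ℝ) < q := mod_cast Nat.one_lt_of_mem_primesLE hq
  have hq_pos : (0 : ℝ) < q := by linarith
  have norm_eq : ‖q • (x : UnitAddCircle)‖ = q * |x - round (q * x) / q| := by
    rw [← AddCircle.coe_nsmul, nsmul_eq_mul, UnitAddCircle.norm_eq, ← Nat.abs_cast q, ← abs_mul,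
      Nat.abs_cast, mul_sub, mul_div_cancel₀ _ hq_pos.ne']
  rw [norm_eq] at hlower hupper
  refine ⟨round (q * x), q, mod_cast hq_one, fun hx_eq => ?_, ?_⟩
  · rw [Int.cast_natCast, ← sub_eq_zero] at hx_eq
    rw [hx_eq, abs_zero, mul_zero] at hlower
    exact hδ.not_ge hlower
  · rw [Int.cast_natCast, lt_div_iff₀ (by positivity)]
    have : q * (|x - round (q * x) / q| * q ^ k) < q * 1 :=
      calc q * (|x - round (q * x) / q| * q ^ k) ≤ 3 * δ * q ^ k := by
            rw [← mul_assoc]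
            gcongr
        _ ≤ 3 * δ * L ^ k := by
          gcongr
          exact Nat.le_of_mem_primesLE hq
        _ < q * 1 := by linarith
    exact lt_of_mul_lt_mul_left this hq_pos.le

lemma isLittleO_rpow_primeCounting {β : ℝ} (hβ : β < 1) :
    (fun n : ℕ => (n : ℝ) ^ β) =o[atTop] fun n : ℕ => (Nat.primeCounting n : ℝ) := by
  refine Asymptotics.isLittleO_iff.2 fun ε hε => ?_
  have log_le : ∀ᶠ n : ℕ in atTop, Real.log n ≤ ε / 4 * (n : ℝ) ^ (1 - β) := by
    filter_upwards [tendsto_natCast_atTop_atTop.eventually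
      ((isLittleO_log_rpow_atTop (sub_pos.2 hβ)).bound (by positivity : 0 < ε / 4))] with n hn
    rw [Real.norm_of_nonneg (by positivity : (0 : ℝ) ≤ (n : ℝ) ^ (1 - β))] at hn
    exact (le_abs_self _).trans hn
  have log_succ_le : ∀ᶠ n : ℕ in atTop, Real.log (n + 1) ≤ 1 / 8 * (n + 1) := by
    filter_upwards [(tendsto_atTop_add_const_right _ 1 tendsto_natCast_atTop_atTop).eventually
      (Real.isLittleO_log_id_atTop.bound (by norm_num : (0 : ℝ) < 1 / 8))] with n hn
    rw [id, Real.norm_of_nonneg (by positivity : (0 : ℝ) ≤ (n : ℝ) + 1)] at hn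
    exact (le_abs_self _).trans hn
  filter_upwards [log_le, log_succ_le, eventually_ge_atTop 2] with n hlog hlog_succ hn
  have hn' : (2 : ℝ) ≤ n := mod_cast hn
  have log_pos : 0 < Real.log n := Real.log_pos (by linarith)
  rw [Real.norm_of_nonneg (by positivity), Real.norm_of_nonneg (by positivity)]
  refine le_of_mul_le_mul_right ?_ log_pos
  calc (n : ℝ) ^ β * Real.log n ≤ (n : ℝ) ^ β * (ε / 4 * (n : ℝ) ^ (1 - β)) := by gcongr
    _ = ε * (n / 4) := by
      rw [mul_left_comm, ← Real.rpow_add (by positivity), add_sub_cancel, Real.rpow_one]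
      ring
    _ ≤ ε * (n * Real.log 2 - Real.log (n + 1)) := by
      gcongr
      nlinarith [Real.log_two_gt_d9]
    _ ≤ ε * (Nat.primeCounting n * Real.log n) := by
      gcongr
      exact (div_le_iff₀ log_pos).1 (Chebyshev.pi_ge n)
    _ = ε * Nat.primeCounting n * Real.log n := by ring

lemma exists_density {k : ℕ} {α η : ℝ} (hα : 0 < α) (hαk : 2 * α * (k + 1) < 1) (hη : 0 < η) :
    ∃ (F : UnitAddCircle → ℝ) (b : ℤ → ℂ) (K : Set ℝ), Continuous F ∧ (∀ x, 0 ≤ F x) ∧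
      (∀ x, HasSum (fun m => b m * fourier m x) (F x : ℂ)) ∧ b 0 = 1 ∧
      (∀ m ≠ 0, ‖b m‖ ≤ η * (1 + |(m : ℝ)|) ^ (-α)) ∧
      (∃ B, ∀ m, ‖b m‖ ≤ B * (1 + |(m : ℝ)|) ^ (-2 : ℝ)) ∧
      IsClosed K ∧ K ⊆ liouvilleLevel k ∧ ∀ x : ℝ, F x ≠ 0 → x ∈ K := by
  have hα₁ : α ≤ 1 := by nlinarith [Nat.cast_nonneg (α := ℝ) k]
  obtain ⟨L, hL, hL₂⟩ := (((isLittleO_rpow_primeCounting hαk).bound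
    (by positivity : 0 < η / (2 / α * 8 ^ (2 * α)))).and (eventually_ge_atTop 2)).exists
  rw [Real.norm_of_nonneg (by positivity), Real.norm_of_nonneg (by positivity),
    ← Nat.primesLE_card_eq_primeCounting, div_mul_eq_mul_div, le_div_iff₀ (by positivity)] at hL
  have card_pos : (0 : ℝ) < L.primesLE.card :=
    mod_cast Finset.card_pos.2 ⟨2, Nat.mem_primesLE.2 ⟨hL₂, Nat.prime_two⟩⟩
  have hL_one : (1 : ℝ) ≤ (L : ℝ) ^ k := one_le_pow₀ (mod_cast one_le_two.trans hL₂)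
  set δ : ℝ := 1 / (4 * L ^ k) with hδ_def
  have hδ₀ : 0 < δ := by positivity
  have hδ : δ ≤ 1 / 4 := one_div_le_one_div_of_le (by norm_num) (by linarith)
  have scale_rpow : (2 * L / δ) ^ (2 * α) = 8 ^ (2 * α) * (L : ℝ) ^ (2 * α * (k + 1)) := by
    rw [show 2 * L / δ = 8 * (L : ℝ) ^ (k + 1) by rw [hδ_def]; field_simp; ring,
      Real.mul_rpow (by positivity) (by positivity), ← Real.rpow_natCast_mul (by positivity),
      mul_comm (2 * α)]
    push_cast
    rfl
  refine ⟨primeAvg L δ, primeAvgCoeff L δ, nearPrimeFractions L δ, continuous_primeAvg L δ,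
    primeAvg_nonneg L δ, hasSum_primeAvgCoeff hδ₀ (by linarith) L, primeAvgCoeff_zero hL₂ δ,
    fun m hm => (norm_primeAvgCoeff_le_rpow hm hδ₀ hα hα₁ L).trans ?_,
    ⟨_, norm_primeAvgCoeff_le_sq hL₂ hδ₀ (by linarith)⟩, isClosed_nearPrimeFractions L δ,
    nearPrimeFractions_subset_liouvilleLevel hδ₀ ?_,
    fun x => mem_nearPrimeFractions_of_primeAvg_ne_zero hδ₀.le hδ⟩
  · gcongr
    rw [div_le_iff₀ card_pos, scale_rpow]
    linarith
  · rw [hδ_def]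
    field_simp
    norm_num

/-! ### Convolution of polynomially decaying functions -/

lemma rpow_neg_le_two_rpow_mul {u v s : ℝ} (hv : 0 < v) (huv : v ≤ 2 * u) (hs : 0 ≤ s) :
    u ^ (-s) ≤ 2 ^ s * v ^ (-s) :=
  calc u ^ (-s) ≤ (v / 2) ^ (-s) :=
        Real.rpow_le_rpow_of_nonpos (by positivity) (by linarith) (by linarith)
    _ = 2 ^ s * v ^ (-s) := by
      rw [Real.div_rpow hv.le zero_le_two, Real.rpow_neg zero_le_two, div_inv_eq_mul, mul_comm]

lemma one_add_abs_rpow_neg_mul_le {a s : ℝ} (ha : 0 ≤ a) (has : a ≤ s) (x y : ℝ) :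
    (1 + |x|) ^ (-a) * (1 + |y|) ^ (-s) ≤
      2 ^ s * (1 + |x + y|) ^ (-a) * ((1 + |x|) ^ (-s) + (1 + |y|) ^ (-s)) := by
  have larger_le {u v : ℝ} (huv : |v| ≤ |u|) :
      (1 + |u|) ^ (-a) ≤ 2 ^ s * (1 + |u + v|) ^ (-a) := by
    have ratio : 1 + |u + v| ≤ 2 * (1 + |u|) := by linarith [abs_add_le u v]
    refine (rpow_neg_le_two_rpow_mul (by positivity) ratio ha).trans ?_
    gcongr
    exact one_le_two
  rcases le_total |y| |x| with h | h
  · calc (1 + |x|) ^ (-a) * (1 + |y|) ^ (-s)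
        ≤ 2 ^ s * (1 + |x + y|) ^ (-a) * (1 + |y|) ^ (-s) := by
          gcongr
          exact larger_le h
      _ ≤ 2 ^ s * (1 + |x + y|) ^ (-a) * ((1 + |x|) ^ (-s) + (1 + |y|) ^ (-s)) := by
        gcongr
        exact le_add_of_nonneg_left (by positivity)
  · have exchange : (1 + |y|) ^ (-(s - a)) ≤ (1 + |x|) ^ (-(s - a)) :=
      Real.rpow_le_rpow_of_nonpos (by positivity) (by linarith) (by linarith)
    have split (u : ℝ) : (1 + |u|) ^ (-s) = (1 + |u|) ^ (-a) * (1 + |u|) ^ (-(s - a)) := by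
      rw [← Real.rpow_add (by positivity)]
      congr 1
      ring
    calc (1 + |x|) ^ (-a) * (1 + |y|) ^ (-s)
        = (1 + |x|) ^ (-a) * ((1 + |y|) ^ (-a) * (1 + |y|) ^ (-(s - a))) := by rw [split y]
      _ ≤ (1 + |x|) ^ (-a) * ((1 + |y|) ^ (-a) * (1 + |x|) ^ (-(s - a))) := by gcongr
      _ = (1 + |y|) ^ (-a) * (1 + |x|) ^ (-s) := by
        rw [split x]
        ring
      _ ≤ 2 ^ s * (1 + |x + y|) ^ (-a) * (1 + |x|) ^ (-s) := by
        gcongr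
        rw [add_comm x]
        exact larger_le h
      _ ≤ 2 ^ s * (1 + |x + y|) ^ (-a) * ((1 + |x|) ^ (-s) + (1 + |y|) ^ (-s)) := by
        gcongr
        exact le_add_of_nonneg_right (by positivity)

lemma summable_one_add_abs_int_rpow {s : ℝ} (hs : 1 < s) :
    Summable fun m : ℤ => (1 + |(m : ℝ)|) ^ (-s) := by
  refine (Real.summable_abs_int_rpow hs).of_norm_bounded_eventually ?_
  filter_upwards [(finite_singleton (0 : ℤ)).compl_mem_cofinite] with m hm
  have : 0 < |(m : ℝ)| := abs_pos.2 (Int.cast_ne_zero.2 hm)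
  rw [Real.norm_of_nonneg (by positivity)]
  exact Real.rpow_le_rpow_of_nonpos this (by linarith) (by linarith)

lemma exists_hasSum_one_add_abs_sub_int_rpow_le {s : ℝ} (hs : 1 < s) :
    ∃ S, ∀ x : ℝ, ∃ S' ≤ S, HasSum (fun m : ℤ => (1 + |x - m|) ^ (-s)) S' := by
  refine ⟨2 ^ s * ∑' m : ℤ, (1 + |(m : ℝ)|) ^ (-s), fun x => ?_⟩
  have hasSum_translate : HasSum (fun m : ℤ => 2 ^ s * (1 + |((round x - m : ℤ) : ℝ)|) ^ (-s))
      (2 ^ s * ∑' m : ℤ, (1 + |(m : ℝ)|) ^ (-s)) :=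
    ((Equiv.subLeft (round x)).hasSum_iff.2 (summable_one_add_abs_int_rpow hs).hasSum).mul_left _
  have le_translate (m : ℤ) :
      (1 + |x - m|) ^ (-s) ≤ 2 ^ s * (1 + |((round x - m : ℤ) : ℝ)|) ^ (-s) := by
    have near : 1 + |((round x - m : ℤ) : ℝ)| ≤ 2 * (1 + |x - m|) := by
      have := abs_sub_round x
      have := abs_sub_le (round x : ℝ) x m
      rw [abs_sub_comm _ x] at this
      push_cast
      linarith [abs_nonneg (x - m)]
    exact rpow_neg_le_two_rpow_mul (by positivity) near (by linarith)
  have summable : Summable fun m : ℤ => (1 + |x - m|) ^ (-s) :=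
    hasSum_translate.summable.of_nonneg_of_le (fun m => by positivity) le_translate
  exact ⟨_, hasSum_le le_translate summable.hasSum hasSum_translate, summable.hasSum⟩

lemma exists_norm_convolution_le {s : ℝ} (hs : 1 < s) :
    ∃ C > (0 : ℝ), ∀ {a A B : ℝ} {b : ℤ → ℂ} {g : ℝ → ℂ} {x : ℝ} {z : ℂ}, 0 ≤ a → a ≤ s →
      (∀ m, ‖b m‖ ≤ B * (1 + |(m : ℝ)|) ^ (-a)) → (∀ x, ‖g x‖ ≤ A * (1 + |x|) ^ (-s)) →
      HasSum (fun m : ℤ => b m * g (x - m)) z → ‖z‖ ≤ C * B * A * (1 + |x|) ^ (-a) := by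
  obtain ⟨S, hS⟩ := exists_hasSum_one_add_abs_sub_int_rpow_le hs
  have hS₀ : 0 ≤ S := by
    obtain ⟨S', hS', hasSum⟩ := hS 0
    exact (hasSum.nonneg fun m => by positivity).trans hS'
  refine ⟨2 ^ s * (S + S) + 1, by positivity, fun {a A B b g x z} ha has hb hg hz => ?_⟩
  have hB : 0 ≤ B := by simpa using (norm_nonneg _).trans (hb 0)
  have hA : 0 ≤ A := by simpa using (norm_nonneg _).trans (hg 0)
  obtain ⟨S₁, hS₁, hasSum₁⟩ := hS 0
  obtain ⟨S₂, hS₂, hasSum₂⟩ := hS x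
  simp only [zero_sub, abs_neg] at hasSum₁
  have term_le (m : ℤ) : ‖b m * g (x - m)‖ ≤ B * A * (2 ^ s * (1 + |x|) ^ (-a)) *
      ((1 + |(m : ℝ)|) ^ (-s) + (1 + |x - m|) ^ (-s)) :=
    calc ‖b m * g (x - m)‖
        ≤ B * (1 + |(m : ℝ)|) ^ (-a) * (A * (1 + |x - m|) ^ (-s)) := by
          rw [norm_mul]
          exact mul_le_mul (hb m) (hg _) (norm_nonneg _) (by positivity)
      _ = B * A * ((1 + |(m : ℝ)|) ^ (-a) * (1 + |x - m|) ^ (-s)) := by ring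
      _ ≤ B * A * (2 ^ s * (1 + |m + (x - m)|) ^ (-a) *
            ((1 + |(m : ℝ)|) ^ (-s) + (1 + |x - m|) ^ (-s))) :=
        mul_le_mul_of_nonneg_left (one_add_abs_rpow_neg_mul_le ha has _ _) (by positivity)
      _ = _ := by rw [add_sub_cancel, mul_assoc (B * A)]
  calc ‖z‖ ≤ B * A * (2 ^ s * (1 + |x|) ^ (-a)) * (S₁ + S₂) :=
        hz.norm_le_of_bounded ((hasSum₁.add hasSum₂).mul_left _) term_le
    _ ≤ B * A * (2 ^ s * (1 + |x|) ^ (-a)) * (S + S) := by gcongr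
    _ = 2 ^ s * (S + S) * B * A * (1 + |x|) ^ (-a) := by ring
    _ ≤ (2 ^ s * (S + S) + 1) * B * A * (1 + |x|) ^ (-a) := by
      gcongr
      exact le_add_of_nonneg_right zero_le_one

/-! ### Perturbing a measure by a periodic density -/

lemma fourierT_eq_charFun (μ : Measure ℝ) (ξ : ℝ) :
    fourierT μ ξ = charFun μ (-2 * Real.pi * ξ) := by
  rw [fourierT, charFun_apply_real]
  push_cast
  rfl

lemma fourierT_zero (μ : Measure ℝ) : fourierT μ 0 = μ.real univ := by
  rw [fourierT_eq_charFun, mul_zero, charFun_zero]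

lemma fourierT_smul (c : ENNReal) (μ : Measure ℝ) (ξ : ℝ) :
    fourierT (c • μ) ξ = c.toReal * fourierT μ ξ := by
  rw [fourierT, integral_smul_measure, fourierT, Complex.real_smul]

/-- The measure `F dν` for a density `F` on the circle, read as a `1`-periodic function on `ℝ`. -/
noncomputable def withPeriodicDensity (ν : Measure ℝ) (F : UnitAddCircle → ℝ) : Measure ℝ :=
  ν.withDensity fun x => ENNReal.ofReal (F x)

section PeriodicDensity

variable {ν : Measure ℝ} {F : UnitAddCircle → ℝ}

lemma isFiniteMeasure_withPeriodicDensity [IsFiniteMeasure ν] (hF : Continuous F) :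
    IsFiniteMeasure (withPeriodicDensity ν F) := by
  obtain ⟨c, hc⟩ := isCompact_univ.exists_bound_of_continuousOn hF.continuousOn
  have integrable : Integrable (fun x : ℝ => F x) ν :=
    Integrable.of_bound (hF.comp (AddCircle.continuous_mk' 1)).aestronglyMeasurable c
      (ae_of_all _ fun x => hc x (mem_univ _))
  exact isFiniteMeasure_withDensity_ofReal integrable.2

lemma withPeriodicDensity_compl_eq_zero {K : Set ℝ} (hK : MeasurableSet K)
    (h : ∀ x : ℝ, F x ≠ 0 → x ∈ K) : withPeriodicDensity ν F Kᶜ = 0 := by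
  rw [withPeriodicDensity, withDensity_apply _ hK.compl]
  refine setLIntegral_eq_zero hK.compl fun x hx => ?_
  rw [not_imp_comm.1 (h x) hx, ENNReal.ofReal_zero, Pi.zero_apply]

lemma hasSum_fourierT_withPeriodicDensity [IsFiniteMeasure ν] {b : ℤ → ℂ}
    (hF : Continuous F) (hF₀ : ∀ x, 0 ≤ F x)
    (hb : Summable fun m => ‖b m‖) (hbF : ∀ x, HasSum (fun m => b m * fourier m x) (F x : ℂ))
    (ξ : ℝ) :
    HasSum (fun m : ℤ => b m * fourierT ν (ξ - m)) (fourierT (withPeriodicDensity ν F) ξ) := by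
  set e : ℝ → ℝ → ℂ := fun ξ x => Complex.exp (((-2 * Real.pi * ξ * x : ℝ) : ℂ) * Complex.I)
  have norm_e (ξ x : ℝ) : ‖e ξ x‖ = 1 := Complex.norm_exp_ofReal_mul_I _
  have modulate (m : ℤ) (x : ℝ) : fourier m (x : UnitAddCircle) * e ξ x = e (ξ - m) x := by
    rw [fourier_coe_apply, ← Complex.exp_add]
    congr 1
    push_cast
    ring
  have expand : fourierT (withPeriodicDensity ν F) ξ = ∫ x, ∑' m : ℤ, b m * e (ξ - m) x ∂ν := by
    have measurable : Measurable fun x : ℝ => ENNReal.ofReal (F x) :=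
      (hF.comp (AddCircle.continuous_mk' 1)).measurable.ennreal_ofReal
    change ∫ x, e ξ x ∂withPeriodicDensity ν F = _
    rw [withPeriodicDensity, integral_withDensity_eq_integral_toReal_smul measurable (by simp)]
    refine integral_congr_ae (ae_of_all _ fun x => ?_)
    simp only [ENNReal.toReal_ofReal (hF₀ _), Complex.real_smul, ← (hbF x).tsum_eq,
      ← tsum_mul_right, mul_assoc, modulate]
  have integrable (m : ℤ) : Integrable (fun x => b m * e (ξ - m) x) ν :=
    Integrable.of_bound (by fun_prop) ‖b m‖ (ae_of_all _ fun x => by simp [norm_e])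
  have factor (m : ℤ) : b m * fourierT ν (ξ - m) = ∫ x, b m * e (ξ - m) x ∂ν :=
    (integral_const_mul _ _).symm
  simp only [expand, factor]
  refine hasSum_integral_of_summable_integral_norm integrable ?_
  simpa [norm_e] using hb.mul_left _

end PeriodicDensity

/-- The property `|μ̂(ξ)| ≤ A * (1 + |ξ|) ^ (-2)` for some `A`, preserved along the construction so
that the convolution sums of `exists_norm_convolution_le` converge. -/
def HasQuadraticFourierDecay (μ : Measure ℝ) : Prop :=
  ∃ A, ∀ ξ, ‖fourierT μ ξ‖ ≤ A * (1 + |ξ|) ^ (-2 : ℝ)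

lemma HasQuadraticFourierDecay.smul {μ : Measure ℝ} (h : HasQuadraticFourierDecay μ)
    (c : ENNReal) : HasQuadraticFourierDecay (c • μ) := by
  obtain ⟨A, hA⟩ := h
  refine ⟨c.toReal * A, fun ξ => ?_⟩
  rw [fourierT_smul, norm_mul, Complex.norm_of_nonneg ENNReal.toReal_nonneg, mul_assoc]
  gcongr
  exact hA ξ

lemma exists_perturbation {ν : Measure ℝ} [IsFiniteMeasure ν] (hν : HasQuadraticFourierDecay ν)
    {k : ℕ} {α τ : ℝ} (hα : 0 < α) (hαk : 2 * α * (k + 1) < 1) (hτ : 0 < τ) :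
    ∃ σ : Measure ℝ, IsFiniteMeasure σ ∧ σ ≪ ν ∧ HasQuadraticFourierDecay σ ∧
      (∃ K ⊆ liouvilleLevel k, IsClosed K ∧ σ Kᶜ = 0) ∧
      ∀ ξ, ‖fourierT σ ξ - fourierT ν ξ‖ ≤ τ * (1 + |ξ|) ^ (-α) := by
  obtain ⟨A, hA⟩ := hν
  obtain ⟨C, hC, norm_convolution_le⟩ := exists_norm_convolution_le one_lt_two
  have hA₀ : 0 ≤ A := by simpa using (norm_nonneg _).trans (hA 0)
  obtain ⟨F, b, K, hF, hF₀, hbF, hb₀, hb, ⟨B, hB⟩, hK, hKk, hFK⟩ :=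
    exists_density (η := τ / (C * (A + 1))) hα hαk (by positivity)
  have hb_summable : Summable fun m => ‖b m‖ :=
    ((summable_one_add_abs_int_rpow one_lt_two).mul_left B).of_nonneg_of_le
      (fun _ => norm_nonneg _) hB
  have hasSum := hasSum_fourierT_withPeriodicDensity (ν := ν) hF hF₀ hb_summable hbF
  refine ⟨withPeriodicDensity ν F, isFiniteMeasure_withPeriodicDensity hF,
    withDensity_absolutelyContinuous _ _,
    ⟨C * B * A, fun ξ => norm_convolution_le zero_le_two le_rfl hB hA (hasSum ξ)⟩,
    ⟨K, hKk, hK, withPeriodicDensity_compl_eq_zero hK.measurableSet hFK⟩, fun ξ => ?_⟩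
  have hasSum_off_zero : HasSum (fun m => (if m = 0 then 0 else b m) * fourierT ν (ξ - m))
      (fourierT (withPeriodicDensity ν F) ξ - fourierT ν ξ) := by
    refine ((hasSum ξ).sub (hasSum_ite_eq 0 (fourierT ν ξ))).congr_fun fun m => ?_
    split_ifs with hm
    · simp [hm, hb₀]
    · simp
  have off_zero_le (m : ℤ) :
      ‖if m = 0 then 0 else b m‖ ≤ τ / (C * (A + 1)) * (1 + |(m : ℝ)|) ^ (-α) := by
    split_ifs with hm
    · rw [norm_zero]
      positivity
    · exact hb m hm
  calc ‖fourierT (withPeriodicDensity ν F) ξ - fourierT ν ξ‖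
      ≤ C * (τ / (C * (A + 1))) * A * (1 + |ξ|) ^ (-α) :=
        norm_convolution_le hα.le (by nlinarith [Nat.cast_nonneg (α := ℝ) k]) off_zero_le hA
          hasSum_off_zero
    _ = τ * (A / (A + 1)) * (1 + |ξ|) ^ (-α) := by field_simp
    _ ≤ τ * (1 + |ξ|) ^ (-α) := by
      gcongr
      exact mul_le_of_le_one_right hτ.le (div_le_one_of_le₀ (by linarith) (by linarith))

lemma norm_inv_mul_sub_le {u w z : ℂ} {τ : ℝ} (hw : ‖w - 1‖ ≤ τ) (hτ : τ ≤ 1 / 2) :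
    ‖w⁻¹ * u - z‖ ≤ 2 * (‖u - z‖ + τ * ‖z‖) := by
  have half_le : 1 / 2 ≤ ‖w‖ := by
    have := norm_sub_norm_le 1 w
    rw [norm_one, norm_sub_rev] at this
    linarith
  have hw₀ : w ≠ 0 := norm_pos_iff.1 (by linarith)
  calc ‖w⁻¹ * u - z‖ = ‖w‖⁻¹ * ‖(u - z) - (w - 1) * z‖ := by
        rw [← norm_inv, ← norm_mul]
        congr 1
        field_simp
        ring
    _ ≤ 2 * (‖u - z‖ + τ * ‖z‖) := by
      gcongr
      · exact inv_le_of_inv_le₀ two_pos (by linarith)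
      · refine (norm_sub_le _ _).trans ?_
        rw [norm_mul]
        gcongr

lemma exists_probability_perturbation {ν : Measure ℝ} [IsProbabilityMeasure ν]
    (hν : HasQuadraticFourierDecay ν) {k : ℕ} {α ε : ℝ} (hα : 0 < α)
    (hαk : 2 * α * (k + 1) < 1) (hε : 0 < ε) :
    ∃ σ : Measure ℝ, IsProbabilityMeasure σ ∧ σ ≪ ν ∧ HasQuadraticFourierDecay σ ∧
      (∃ K ⊆ liouvilleLevel k, IsClosed K ∧ σ Kᶜ = 0) ∧
      ∀ ξ, ‖fourierT σ ξ - fourierT ν ξ‖ ≤ ε * (1 + |ξ|) ^ (-α) := by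
  obtain ⟨A, hA⟩ := id hν
  have hA₀ : 0 ≤ A := by simpa using (norm_nonneg _).trans (hA 0)
  set τ := min (1 / 2) (ε / (2 * (1 + A)))
  have hτ₀ : 0 < τ := by positivity
  have hτ : τ ≤ 1 / 2 := min_le_left _ _
  obtain ⟨σ, _, hσν, hσ, ⟨K, hKk, hK, hσK⟩, hclose⟩ := exists_perturbation hν hα hαk hτ₀
  have mass_close : ‖fourierT σ 0 - 1‖ ≤ τ := by simpa [fourierT_zero] using hclose 0
  have : NeZero σ := ⟨fun hzero => by
    rw [hzero, fourierT_zero] at mass_close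
    norm_num at mass_close
    linarith⟩
  refine ⟨(σ univ)⁻¹ • σ, inferInstance, Measure.smul_absolutelyContinuous.trans hσν, hσ.smul _,
    ⟨K, hKk, hK, by rw [Measure.smul_apply, hσK, smul_zero]⟩, fun ξ => ?_⟩
  have hα₂ : (1 + |ξ|) ^ (-2 : ℝ) ≤ (1 + |ξ|) ^ (-α) :=
    Real.rpow_le_rpow_of_exponent_le (by linarith [abs_nonneg ξ])
      (by nlinarith [Nat.cast_nonneg (α := ℝ) k])
  calc ‖fourierT ((σ univ)⁻¹ • σ) ξ - fourierT ν ξ‖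
      = ‖(fourierT σ 0)⁻¹ * fourierT σ ξ - fourierT ν ξ‖ := by
        rw [fourierT_smul, fourierT_zero, ENNReal.toReal_inv, Complex.ofReal_inv, Measure.real]
    _ ≤ 2 * (‖fourierT σ ξ - fourierT ν ξ‖ + τ * ‖fourierT ν ξ‖) :=
      norm_inv_mul_sub_le mass_close hτ
    _ ≤ 2 * (τ * (1 + |ξ|) ^ (-α) + τ * (A * (1 + |ξ|) ^ (-α))) := by
      gcongr
      · exact hclose ξ
      · exact (hA ξ).trans (by gcongr)
    _ = 2 * (1 + A) * τ * (1 + |ξ|) ^ (-α) := by ring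
    _ ≤ ε * (1 + |ξ|) ^ (-α) := by
      gcongr
      exact (le_div_iff₀' (by positivity)).1 (min_le_right _ _)

/-! ### The limit measure -/

section WeakLimit

variable {E : Type*} [NormedAddCommGroup E] [InnerProductSpace ℝ E] [FiniteDimensional ℝ E]
  [MeasurableSpace E] [BorelSpace E] {P : ℕ → ProbabilityMeasure E}

lemma exists_tendsto_of_tendsto_charFun {φ : E → ℂ} (hφ : ContinuousAt φ 0)
    (h : ∀ t, Tendsto (fun n => charFun (P n : Measure E) t) atTop (nhds (φ t))) :
    ∃ μ, Tendsto P atTop (nhds μ) := by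
  have tight : IsTightMeasureSet (range fun n => (P n : Measure E)) :=
    isTightMeasureSet_of_tendsto_charFun hφ h
  have compact : IsCompact (closure (range P)) :=
    isCompact_closure_of_isTightMeasureSet <| tight.subset <| by
      rintro _ ⟨_, ⟨n, rfl⟩, rfl⟩
      exact mem_range_self n
  obtain ⟨μ, -, s, hs, hμ⟩ :=
    compact.tendsto_subseq fun n => subset_closure (mem_range_self (f := P) n)
  refine ⟨μ, ProbabilityMeasure.tendsto_of_tendsto_charFun fun t => ?_⟩
  have charFun_μ : charFun (μ : Measure E) t = φ t :=
    tendsto_nhds_unique (ProbabilityMeasure.tendsto_iff_tendsto_charFun.1 hμ t)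
      ((h t).comp hs.tendsto_atTop)
  exact charFun_μ ▸ h t

lemma exists_tendsto_of_dist_charFun_le {d : ℕ → ℝ} (hd : Summable d)
    (h : ∀ k t, dist (charFun (P k : Measure E) t) (charFun (P (k + 1) : Measure E) t) ≤ d k) :
    ∃ μ, Tendsto P atTop (nhds μ) := by
  let u (k : ℕ) : BoundedContinuousFunction E ℂ :=
    .ofNormedAddCommGroup (charFun (P k : Measure E)) continuous_charFun 1
      norm_charFun_le_one
  have dist_u_le (k : ℕ) : dist (u k) (u (k + 1)) ≤ d k :=
    (BoundedContinuousFunction.dist_le (dist_nonneg.trans (h k 0))).2 (h k)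
  obtain ⟨φ, hφ⟩ := cauchySeq_tendsto_of_complete
    (cauchySeq_of_dist_le_of_summable d dist_u_le hd)
  exact exists_tendsto_of_tendsto_charFun φ.continuous.continuousAt fun t =>
    (BoundedContinuousFunction.tendsto_iff_tendstoUniformly.1 hφ).tendsto_at t

end WeakLimit

section Support

variable {Ω : Type*} [MeasurableSpace Ω] [TopologicalSpace Ω] [OpensMeasurableSpace Ω]
  [HasOuterApproxClosed Ω] {μ : ProbabilityMeasure Ω} {K : Set Ω}

lemma measure_compl_eq_zero_of_tendsto {ι : Type*} {L : Filter ι} [L.NeBot]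
    {P : ι → ProbabilityMeasure Ω} (hP : Tendsto P L (nhds μ)) (hK : IsClosed K)
    (h : ∀ᶠ i in L, (P i : Measure Ω) Kᶜ = 0) : (μ : Measure Ω) Kᶜ = 0 := by
  refine le_antisymm ?_ zero_le
  calc (μ : Measure Ω) Kᶜ ≤ liminf (fun i => (P i : Measure Ω) Kᶜ) L :=
        ProbabilityMeasure.le_liminf_measure_open_of_tendsto hP hK.isOpen_compl
    _ = liminf (fun _ => 0) L := liminf_congr h
    _ = 0 := liminf_const 0

lemma measure_compl_eq_zero_of_absolutelyContinuous_succ {P : ℕ → ProbabilityMeasure Ω}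
    (hP : Tendsto P atTop (nhds μ)) (hac : ∀ k, (P (k + 1) : Measure Ω) ≪ P k)
    (hK : IsClosed K) {n : ℕ} (h : (P n : Measure Ω) Kᶜ = 0) : (μ : Measure Ω) Kᶜ = 0 := by
  refine measure_compl_eq_zero_of_tendsto hP hK ?_
  filter_upwards [eventually_ge_atTop n] with m hm
  induction m, hm using Nat.le_induction with
  | base => exact h
  | succ m _ ih => exact hac m ih

end Support

lemma hasQuadraticFourierDecay_gaussianReal :
    HasQuadraticFourierDecay (ProbabilityTheory.gaussianReal 0 1) := by
  refine ⟨2, fun ξ => ?_⟩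
  have norm_eq : ‖fourierT (ProbabilityTheory.gaussianReal 0 1) ξ‖
      = Real.exp (-(2 * Real.pi ^ 2 * ξ ^ 2)) := by
    have exponent_eq : ((-2 * Real.pi * ξ : ℝ) : ℂ) * (0 : ℝ) * Complex.I
        - ((1 : NNReal) : ℝ) * ((-2 * Real.pi * ξ : ℝ) : ℂ) ^ 2 / 2
          = ((-(2 * Real.pi ^ 2 * ξ ^ 2) : ℝ) : ℂ) := by
      push_cast
      ring
    rw [fourierT_eq_charFun, ProbabilityTheory.charFun_gaussianReal, exponent_eq,
      Complex.norm_exp_ofReal]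
  have sq_le_exp : (1 + |ξ|) ^ 2 ≤ 2 * Real.exp (2 * Real.pi ^ 2 * ξ ^ 2) :=
    calc (1 + |ξ|) ^ 2 ≤ 2 * (ξ ^ 2 + 1) := by
          rw [← sq_abs ξ]
          linarith [sq_nonneg (1 - |ξ|)]
      _ ≤ 2 * (2 * Real.pi ^ 2 * ξ ^ 2 + 1) := by
        gcongr
        exact le_mul_of_one_le_left (sq_nonneg ξ) (by nlinarith [Real.pi_gt_three])
      _ ≤ _ := by
        gcongr
        exact Real.add_one_le_exp _
  rw [norm_eq, Real.exp_neg, Real.rpow_neg (by positivity), Real.rpow_two, ← div_eq_mul_inv,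
    inv_le_comm₀ (by positivity) (by positivity), inv_div]
  linarith

lemma exists_seq_perturbation {α ε : ℕ → ℝ} (hα : ∀ k, 0 < α k)
    (hαk : ∀ k : ℕ, 2 * α k * (k + 1) < 1) (hε : ∀ k, 0 < ε k) :
    ∃ P : ℕ → ProbabilityMeasure ℝ, HasQuadraticFourierDecay (P 0) ∧
      (∀ k, (P (k + 1) : Measure ℝ) ≪ P k) ∧
      (∀ k, ∃ K ⊆ liouvilleLevel k, IsClosed K ∧ (P (k + 1) : Measure ℝ) Kᶜ = 0) ∧
      ∀ k ξ, dist (fourierT (P k) ξ) (fourierT (P (k + 1)) ξ) ≤ ε k * (1 + |ξ|) ^ (-α k) := by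
  have step (k : ℕ) (ν : {ν : ProbabilityMeasure ℝ // HasQuadraticFourierDecay ν}) :
      ∃ σ : {σ : ProbabilityMeasure ℝ // HasQuadraticFourierDecay σ},
        (σ.1 : Measure ℝ) ≪ ν.1 ∧
        (∃ K ⊆ liouvilleLevel k, IsClosed K ∧ (σ.1 : Measure ℝ) Kᶜ = 0) ∧
        ∀ ξ, dist (fourierT ν.1 ξ) (fourierT σ.1 ξ) ≤ ε k * (1 + |ξ|) ^ (-α k) := by
    obtain ⟨σ, hσ, hσν, hσ_decay, hK, hclose⟩ :=
      exists_probability_perturbation ν.2 (hα k) (hαk k) (hε k)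
    exact ⟨⟨⟨σ, hσ⟩, hσ_decay⟩, hσν, hK, fun ξ => (dist_eq_norm' _ _).trans_le (hclose ξ)⟩
  choose next hac hK hclose using step
  let P (k : ℕ) : {ν : ProbabilityMeasure ℝ // HasQuadraticFourierDecay ν} :=
    k.rec ⟨⟨ProbabilityTheory.gaussianReal 0 1, inferInstance⟩,
      hasQuadraticFourierDecay_gaussianReal⟩ next
  exact ⟨fun k => (P k).1, (P 0).2, fun k => hac k (P k), fun k => hK k (P k),
    fun k => hclose k (P k)⟩

lemma exists_tendsto_of_dist_fourierT_le {P : ℕ → ProbabilityMeasure ℝ} {d : ℕ → ℝ → ℝ}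
    {ε : ℕ → ℝ} (hε : Summable ε) (hdε : ∀ k ξ, d k ξ ≤ ε k)
    (h : ∀ k ξ, dist (fourierT (P k) ξ) (fourierT (P (k + 1)) ξ) ≤ d k ξ) :
    ∃ μ : ProbabilityMeasure ℝ, Tendsto P atTop (nhds μ) ∧
      ∀ ξ, ‖fourierT μ ξ‖ ≤ ‖fourierT (P 0) ξ‖ + ∑' k, d k ξ := by
  obtain ⟨μ, hμ⟩ := exists_tendsto_of_dist_charFun_le (P := P) hε fun k t => by
    have hξ : t = -2 * Real.pi * (-t / (2 * Real.pi)) := by field_simp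
    rw [hξ, ← fourierT_eq_charFun, ← fourierT_eq_charFun]
    exact (h k _).trans (hdε k _)
  refine ⟨μ, hμ, fun ξ => ?_⟩
  have tendsto : Tendsto (fun k => fourierT (P k) ξ) atTop (nhds (fourierT μ ξ)) := by
    simpa only [fourierT_eq_charFun] using ProbabilityMeasure.tendsto_iff_tendsto_charFun.1 hμ _
  have summable : Summable fun k => d k ξ :=
    hε.of_nonneg_of_le (fun k => dist_nonneg.trans (h k ξ)) fun k => hdε k ξ
  have dist_le := dist_le_tsum_of_dist_le_of_tendsto₀ _ (h · ξ) summable tendsto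
  rw [dist_eq_norm'] at dist_le
  linarith [norm_le_norm_add_norm_sub' (fourierT μ ξ) (fourierT (P 0) ξ)]

theorem exists_liouville_measure {α ε : ℕ → ℝ} (hα : ∀ k, 0 < α k)
    (hαk : ∀ k : ℕ, 2 * α k * (k + 1) < 1) (hε : ∀ k, 0 < ε k) (hε_sum : Summable ε) :
    ∃ μ : Measure ℝ, IsProbabilityMeasure μ ∧ μ {x | Liouville x}ᶜ = 0 ∧
      ∃ A, ∀ ξ, ‖fourierT μ ξ‖ ≤
        A * (1 + |ξ|) ^ (-2 : ℝ) + ∑' k, ε k * (1 + |ξ|) ^ (-α k) := by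
  obtain ⟨P, ⟨A, hA⟩, hac, hK, hclose⟩ := exists_seq_perturbation hα hαk hε
  obtain ⟨μ, hμ, norm_le⟩ := exists_tendsto_of_dist_fourierT_le hε_sum (fun k ξ =>
    mul_le_of_le_one_right (hε k).le <| Real.rpow_le_one_of_one_le_of_nonpos
      (le_add_of_nonneg_right (abs_nonneg ξ)) (neg_nonpos.2 (hα k).le)) hclose
  refine ⟨μ, inferInstance, ?_, A, fun ξ => (norm_le ξ).trans (by gcongr; exact hA ξ)⟩
  have liouville_eq : {x | Liouville x} = ⋂ k, liouvilleLevel k := by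
    ext x
    exact (mem_iInter (s := liouvilleLevel)).symm
  rw [liouville_eq, compl_iInter, measure_iUnion_null_iff]
  intro k
  obtain ⟨K, hKk, hK_closed, hPK⟩ := hK k
  exact measure_mono_null (compl_subset_compl.2 hKk)
    (measure_compl_eq_zero_of_absolutelyContinuous_succ hμ hac hK_closed hPK)

lemma exists_mul_one_add_rpow_neg_le {f : ℝ → ℝ}
    (hf : ∀ α > (0 : ℝ), ∃ M > (0 : ℝ), ∀ ξ, M ≤ ξ → ξ ^ (-α) ≤ f ξ) :
    ∃ M > (0 : ℝ), ∀ α > (0 : ℝ), ∃ c > (0 : ℝ), ∀ ξ, M ≤ ξ → c * (1 + ξ) ^ (-α) ≤ f ξ := by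
  obtain ⟨M, hM, inv_le_f⟩ := hf 1 one_pos
  refine ⟨M, hM, fun α hα => ?_⟩
  obtain ⟨N, hN, rpow_le_f⟩ := hf α hα
  refine ⟨(1 + N)⁻¹, by positivity, fun ξ hξ => ?_⟩
  have hξ₀ : 0 < ξ := hM.trans_le hξ
  rcases le_total N ξ with hNξ | hξN
  · calc (1 + N)⁻¹ * (1 + ξ) ^ (-α) ≤ (1 + ξ) ^ (-α) :=
          mul_le_of_le_one_left (by positivity) (inv_le_one_of_one_le₀ (by linarith))
      _ ≤ ξ ^ (-α) := Real.rpow_le_rpow_of_nonpos hξ₀ (by linarith) (by linarith)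
      _ ≤ f ξ := rpow_le_f ξ hNξ
  · calc (1 + N)⁻¹ * (1 + ξ) ^ (-α) ≤ (1 + N)⁻¹ :=
          mul_le_of_le_one_right (by positivity)
            (Real.rpow_le_one_of_one_le_of_nonpos (by linarith) (by linarith))
      _ ≤ ξ⁻¹ := inv_anti₀ hξ₀ (by linarith)
      _ = ξ ^ (-1 : ℝ) := (Real.rpow_neg_one ξ).symm
      _ ≤ f ξ := inv_le_f ξ hξ

lemma exists_summable_forall_tsum_mul_le {c : ℕ → ℝ} (hc : ∀ k, 0 < c k) :
    ∃ ε : ℕ → ℝ, (∀ k, 0 < ε k) ∧ Summable ε ∧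
      ∀ (g : ℕ → ℝ) (y : ℝ), (∀ k, 0 ≤ g k) → (∀ k, c k * g k ≤ y) → ∑' k, ε k * g k ≤ y := by
  have hε (k : ℕ) : 0 < 1 / 2 / 2 ^ k * min 1 (c k) :=
    mul_pos (by positivity) (lt_min one_pos (hc k))
  refine ⟨fun k => 1 / 2 / 2 ^ k * min 1 (c k), hε, ?_, fun g y hg hgy => ?_⟩
  · exact (summable_geometric_two' 1).of_nonneg_of_le (fun k => (hε k).le)
      fun k => mul_le_of_le_one_right (by positivity) (min_le_left _ _)
  · have term_le (k : ℕ) : 1 / 2 / 2 ^ k * min 1 (c k) * g k ≤ y / 2 / 2 ^ k :=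
      calc 1 / 2 / 2 ^ k * min 1 (c k) * g k = 1 / 2 / 2 ^ k * (min 1 (c k) * g k) :=
            mul_assoc _ _ _
        _ ≤ 1 / 2 / 2 ^ k * y := by
          gcongr
          exact (mul_le_mul_of_nonneg_right (min_le_right _ _) (hg k)).trans (hgy k)
        _ = y / 2 / 2 ^ k := by ring
    have summable : Summable fun k => 1 / 2 / 2 ^ k * min 1 (c k) * g k :=
      (summable_geometric_two' y).of_nonneg_of_le (fun k => mul_nonneg (hε k).le (hg k)) term_le
    exact (summable.tsum_le_tsum term_le (summable_geometric_two' y)).trans_eq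
      (tsum_geometric_two' y)

theorem stmt0_general (f : ℝ → ℝ)
    (hdecay : ∀ α > (0 : ℝ), ∀ ε > (0 : ℝ), ∃ M > (0 : ℝ),
      ∀ ξ, M ≤ ξ → ξ ^ (-α) ≤ ε * f ξ) :
    ∃ μ : Measure ℝ, IsProbabilityMeasure μ ∧ μ {x : ℝ | Liouville x}ᶜ = 0 ∧
      ∃ C > (0 : ℝ), ∃ M' > (0 : ℝ),
        ∀ ξ : ℝ, M' ≤ |ξ| → ‖fourierT μ ξ‖ ≤ C * f |ξ| := by
  obtain ⟨M, hM, exists_le_f⟩ :=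
    exists_mul_one_add_rpow_neg_le fun α hα => by simpa using hdecay α hα 1 one_pos
  have hα (k : ℕ) : (0 : ℝ) < 1 / (4 * (k + 1)) := by positivity
  have hαk (k : ℕ) : 2 * (1 / (4 * (k + 1) : ℝ)) * (k + 1) < 1 := by
    field_simp
    norm_num
  choose c hc c_le_f using fun k : ℕ => exists_le_f _ (hα k)
  obtain ⟨c₂, hc₂, c₂_le_f⟩ := exists_le_f 2 two_pos
  obtain ⟨ε, hε, hε_summable, tsum_le⟩ := exists_summable_forall_tsum_mul_le hc
  obtain ⟨μ, hμ, hμ_liouville, A, hA⟩ := exists_liouville_measure hα hαk hε hε_summable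
  refine ⟨μ, hμ, hμ_liouville, |A| / c₂ + 1, by positivity, M, hM, fun ξ hξ => ?_⟩
  calc ‖fourierT μ ξ‖ ≤ A * (1 + |ξ|) ^ (-2 : ℝ)
        + ∑' k, ε k * (1 + |ξ|) ^ (-(1 / (4 * (k + 1)) : ℝ)) := hA ξ
    _ ≤ |A| / c₂ * (c₂ * (1 + |ξ|) ^ (-2 : ℝ)) + f |ξ| := by
      rw [← mul_assoc, div_mul_cancel₀ _ hc₂.ne']
      gcongr
      · exact le_abs_self A
      · exact tsum_le _ _ (fun k => by positivity) fun k => c_le_f k _ hξ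
    _ ≤ |A| / c₂ * f |ξ| + f |ξ| := by
      gcongr
      exact c₂_le_f _ hξ
    _ = (|A| / c₂ + 1) * f |ξ| := by ring

theorem stmt0 (f : ℝ → ℝ)
    (hf_nonneg : ∀ ξ, 0 ≤ ξ → 0 ≤ f ξ)
    (hf_bdd : ∃ B : ℝ, ∀ ξ, 0 ≤ ξ → f ξ ≤ B)
    (hf_reg : AntitoneOn f (Ici 0) ∨ ContinuousOn f (Ici 0))
    (hdecay : ∀ α > (0 : ℝ), ∀ ε > (0 : ℝ), ∃ M > (0 : ℝ),
      ∀ ξ, M ≤ ξ → ξ ^ (-α) ≤ ε * f ξ) :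
    ∃ μ : Measure ℝ, IsProbabilityMeasure μ ∧ μ {x : ℝ | Liouville x}ᶜ = 0 ∧
      ∃ C > (0 : ℝ), ∃ M' > (0 : ℝ),
        ∀ ξ : ℝ, M' ≤ |ξ| → ‖fourierT μ ξ‖ ≤ C * f |ξ| :=
  stmt0_general f hdecay
end

section
/- Let f : [0,∞) → [0,∞) be a bounded function that is either antitone or continuous. Suppose there exist α₀ > 0, c > 0 and M > 0 such that c·f(ξ) ≤ ξ^(−α₀) for all ξ ≥ M (i.e. liminf_{ξ→+∞} ξ^(−α₀)/f(ξ) > 0 for some α₀ > 0). Then there is no Borel probability measure μ on ℝ with μ(ℝ \ 𝕃) = 0 for which there exist C > 0, M' > 0 with |μ̂(ξ)| ≤ C·f(|ξ|) for all |ξ| ≥ M'. -/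
open MeasureTheory Filter Set

/-! If `x` is very close to `p / q`, then the first `q ^ 2` multiples of `q ^ n * x` are close to
integers, so `∑ j < q ^ 2, e^(2πi j q ^ n x)` has modulus comparable to `q ^ 2`. Under `μ` the
mean square of this sum is `∑ j k, μ̂((j - k) q ^ n)`. When `μ̂` decays polynomially and `n` is
large, the off-diagonal terms are `O(q ^ (-2))`, so by Chebyshev the points close to the multiples
of `1 / q` have measure `O(q ^ (-2))`. This is summable in `q`, so Borel–Cantelli excludes Liouville
numbers. -/

lemma one_half_le_cos_two_pi_mul {y : ℝ} {p : ℤ} (h : |y - p| ≤ 1 / 6) :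
    1 / 2 ≤ Real.cos (2 * Real.pi * y) := by
  have abs_le : |2 * Real.pi * (y - p)| ≤ Real.pi / 3 := by
    rw [abs_mul, abs_of_pos Real.two_pi_pos]
    nlinarith [Real.pi_pos]
  calc 1 / 2 = Real.cos (Real.pi / 3) := Real.cos_pi_div_three.symm
    _ ≤ Real.cos |2 * Real.pi * (y - p)| :=
        Real.cos_le_cos_of_nonneg_of_le_pi (abs_nonneg _) (by linarith [Real.pi_pos]) abs_le
    _ = Real.cos (2 * Real.pi * y - p * (2 * Real.pi)) := by rw [Real.cos_abs]; ring_nf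
    _ = Real.cos (2 * Real.pi * y) := Real.cos_sub_int_mul_two_pi _ _

section TrigSum

open BoundedContinuousFunction

variable {ι E : Type*} [NormedAddCommGroup E] [InnerProductSpace ℝ E]

lemma innerProbChar_mul_star (t u : E) :
    innerProbChar t * star (innerProbChar u) = innerProbChar (t - u) := by
  rw [sub_eq_add_neg]
  exact ((char_add_eq_mul t (-u)).trans (congrArg _ (char_neg u))).symm

/-- The trigonometric sum `x ↦ ∑ i ∈ s, e^(i⟨x, t i⟩)` with frequencies `t`, whose mean
square against a measure is a sum of values of the characteristic function. It is bundled as a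
bounded continuous function so that it is integrable against every finite measure. -/
noncomputable def trigSum (t : ι → E) (s : Finset ι) : E →ᵇ ℂ :=
  ∑ i ∈ s, innerProbChar (t i)

lemma trigSum_apply (t : ι → E) (s : Finset ι) (x : E) :
    trigSum t s x = ∑ i ∈ s, innerProbChar (t i) x :=
  sum_apply ..

lemma ofReal_norm_sq_trigSum (t : ι → E) (s : Finset ι) (x : E) :
    ((‖trigSum t s x‖ ^ 2 : ℝ) : ℂ) = ∑ i ∈ s, ∑ j ∈ s, innerProbChar (t i - t j) x := by
  simp only [← innerProbChar_mul_star, mul_apply, star_apply,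
    ← Finset.sum_mul_sum, ← star_sum, ← trigSum_apply]
  rw [Complex.star_def, Complex.mul_conj']
  norm_cast

lemma half_card_le_norm_trigSum {t : ι → ℝ} {s : Finset ι} {x : ℝ}
    (h : ∀ i ∈ s, ∃ p : ℤ, |t i * x - p| ≤ 1 / 6) :
    1 / 2 * s.card ≤ ‖trigSum (fun i ↦ 2 * Real.pi * t i) s x‖ := by
  have re_char (i : ι) : (innerProbChar (2 * Real.pi * t i) x).re =
      Real.cos (2 * Real.pi * (t i * x)) := by
    rw [innerProbChar_apply, Complex.exp_ofReal_mul_I_re, Real.inner_apply]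
    ring_nf
  calc (1 / 2 : ℝ) * s.card = ∑ _ ∈ s, 1 / 2 := by simp [mul_comm]
    _ ≤ ∑ i ∈ s, Real.cos (2 * Real.pi * (t i * x)) := Finset.sum_le_sum fun i hi ↦
        (h i hi).elim fun _ ↦ one_half_le_cos_two_pi_mul
    _ = (trigSum (fun i ↦ 2 * Real.pi * t i) s x).re := by
        simp only [trigSum_apply, Complex.re_sum, re_char]
    _ ≤ ‖trigSum (fun i ↦ 2 * Real.pi * t i) s x‖ := Complex.re_le_norm _

variable [MeasurableSpace E] [BorelSpace E] {μ : Measure E} [IsFiniteMeasure μ]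

lemma ofReal_integral_norm_sq_trigSum (t : ι → E) (s : Finset ι) :
    ((∫ x, ‖trigSum t s x‖ ^ 2 ∂μ : ℝ) : ℂ) = ∑ i ∈ s, ∑ j ∈ s, charFun μ (t i - t j) := by
  have integrable_char (u : E) : Integrable (innerProbChar u) μ := integrable μ _
  simp only [← integral_complex_ofReal, ofReal_norm_sq_trigSum, charFun_eq_integral_innerProbChar]
  rw [integral_finsetSum _ fun i _ ↦ integrable_finsetSum _ fun j _ ↦ integrable_char _]
  exact Finset.sum_congr rfl fun i _ ↦ integral_finsetSum _ fun j _ ↦ integrable_char _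

lemma integral_norm_sq_trigSum_le {t : ι → E} {s : Finset ι} {B : ℝ} (hB : 0 ≤ B)
    (h : (s : Set ι).Pairwise fun i j ↦ ‖charFun μ (t i - t j)‖ ≤ B) :
    ∫ x, ‖trigSum t s x‖ ^ 2 ∂μ ≤ s.card * μ.real univ + s.card ^ 2 * B := by
  classical
  have term_le : ∀ i ∈ s, ∀ j ∈ s,
      ‖charFun μ (t i - t j)‖ ≤ (if i = j then μ.real univ else 0) + B := by
    intro i hi j hj
    split_ifs with hij
    · exact (norm_charFun_le _).trans (le_add_of_nonneg_right hB)
    · simpa only [zero_add] using h hi hj hij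
  calc ∫ x, ‖trigSum t s x‖ ^ 2 ∂μ
      ≤ ‖((∫ x, ‖trigSum t s x‖ ^ 2 ∂μ : ℝ) : ℂ)‖ := by
        rw [Complex.norm_real]
        exact Real.le_norm_self _
    _ ≤ ∑ i ∈ s, ∑ j ∈ s, ((if i = j then μ.real univ else 0) + B) := by
        rw [ofReal_integral_norm_sq_trigSum]
        exact (norm_sum_le _ _).trans <| Finset.sum_le_sum fun i hi ↦
          (norm_sum_le _ _).trans <| Finset.sum_le_sum (term_le i hi)
    _ = s.card * μ.real univ + s.card ^ 2 * B := by
        simp only [Finset.sum_add_distrib, Finset.sum_ite_eq, Finset.sum_const, nsmul_eq_mul,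
          Finset.sum_ite_mem, Finset.inter_self]
        ring

lemma measureReal_mul_card_le_norm_trigSum_le {t : ι → E} {s : Finset ι} (hs : s.Nonempty)
    {a B : ℝ} (ha : 0 < a) (hB : 0 ≤ B)
    (h : (s : Set ι).Pairwise fun i j ↦ ‖charFun μ (t i - t j)‖ ≤ B) :
    μ.real {x | a * s.card ≤ ‖trigSum t s x‖} ≤ (μ.real univ / s.card + B) / a ^ 2 := by
  have card_pos : (0 : ℝ) < s.card := mod_cast hs.card_pos
  have sq_integrable : Integrable (fun x ↦ ‖trigSum t s x‖ ^ 2) μ :=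
    integrable μ ((trigSum t s).normComp ^ 2)
  have chebyshev := mul_meas_ge_le_integral_of_nonneg
    (.of_forall fun x ↦ sq_nonneg ‖trigSum t s x‖) sq_integrable ((a * s.card) ^ 2)
  simp only [pow_le_pow_iff_left₀ (mul_pos ha card_pos).le (norm_nonneg _) two_ne_zero]
    at chebyshev
  calc μ.real {x | a * s.card ≤ ‖trigSum t s x‖}
      ≤ (s.card * μ.real univ + s.card ^ 2 * B) / (a * s.card) ^ 2 := by
        rw [le_div_iff₀' (by positivity)]
        exact chebyshev.trans (integral_norm_sq_trigSum_le hB h)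
    _ = (μ.real univ / s.card + B) / a ^ 2 := by field_simp

end TrigSum

section FiniteMeasure

lemma charFun_two_pi_mul (μ : Measure ℝ) (ξ : ℝ) :
    charFun μ (2 * Real.pi * ξ) = fourierT μ (-ξ) := by
  rw [charFun_apply_real, fourierT]
  congr with x
  push_cast
  ring_nf

variable {μ : Measure ℝ} [IsFiniteMeasure μ]

lemma measureReal_abs_mul_sub_intCast_le {N : ℕ} (hN : 0 < N) {L B : ℝ} (hL : 0 < L)
    (h : ∀ ξ : ℝ, L ≤ |ξ| → ‖fourierT μ ξ‖ ≤ B) :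
    μ.real {x | ∃ p : ℤ, |L * x - p| ≤ 1 / (6 * N)} ≤ 4 * (μ.real univ / N + B) := by
  have B_nonneg : 0 ≤ B := (norm_nonneg _).trans (h L (le_abs_self L))
  have decay : ((Finset.range N : Finset ℕ) : Set ℕ).Pairwise fun j k ↦
      ‖charFun μ (2 * Real.pi * (j * L) - 2 * Real.pi * (k * L))‖ ≤ B := by
    intro j _ k _ hjk
    rw [← mul_sub, charFun_two_pi_mul]
    refine h _ ?_
    have one_le_abs_sub : (1 : ℝ) ≤ |(j : ℝ) - k| := by
      exact_mod_cast Int.one_le_abs (sub_ne_zero.2 (Nat.cast_injective.ne hjk : (j : ℤ) ≠ k))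
    rw [abs_neg, ← sub_mul, abs_mul, abs_of_pos hL]
    exact le_mul_of_one_le_left hL.le one_le_abs_sub
  have subset : {x | ∃ p : ℤ, |L * x - p| ≤ 1 / (6 * N)} ⊆
      {x | 1 / 2 * ((Finset.range N).card : ℝ) ≤
        ‖trigSum (fun j : ℕ ↦ 2 * Real.pi * (j * L)) (Finset.range N) x‖} := by
    rintro x ⟨p, hp⟩
    refine half_card_le_norm_trigSum fun j hj ↦ ⟨j * p, ?_⟩
    have hjN : (j : ℝ) ≤ N := mod_cast (Finset.mem_range.1 hj).le
    calc |j * L * x - ((j * p : ℤ) : ℝ)| = j * |L * x - p| := by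
          push_cast
          rw [mul_assoc, ← mul_sub, abs_mul, Nat.abs_cast]
      _ ≤ N * (1 / (6 * N)) := by gcongr
      _ = 1 / 6 := by field_simp
  calc μ.real {x | ∃ p : ℤ, |L * x - p| ≤ 1 / (6 * N)}
      ≤ (μ.real univ / (Finset.range N).card + B) / (1 / 2) ^ 2 :=
        (measureReal_mono subset).trans <| measureReal_mul_card_le_norm_trigSum_le
          (Finset.nonempty_range_iff.2 hN.ne') one_half_pos B_nonneg decay
    _ = 4 * (μ.real univ / N + B) := by
        rw [Finset.card_range]
        ring

/-- The set of reals within distance `q ^ (-r)` of a multiple of `1 / q`; a Liouville number lies in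
infinitely many of these sets, for each exponent `r`. -/
def nearRat (r q : ℕ) : Set ℝ :=
  {x | ∃ p : ℤ, |x - p / q| < 1 / (q : ℝ) ^ r}

lemma ae_not_liouville_of_summable {r : ℕ} (h : Summable fun q ↦ μ.real (nearRat r q)) :
    ∀ᵐ x ∂μ, ¬ Liouville x := by
  have tsum_ne_top : ∑' q, μ (nearRat r q) ≠ ⊤ := by
    simpa only [ofReal_measureReal (measure_ne_top μ _)] using h.tsum_ofReal_ne_top
  filter_upwards [ae_eventually_notMem tsum_ne_top] with x hx hL
  obtain ⟨q, hxq, p, -, hp⟩ := (hx.and_frequently (hL.frequently_exists_num r)).exists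
  exact hxq ⟨p, hp⟩

lemma nearRat_add_six_subset {n q : ℕ} (hq : 2 ≤ q) :
    nearRat (n + 6) q ⊆ {x | ∃ p : ℤ, |(q : ℝ) ^ (n + 1) * x - p| ≤ 1 / (6 * (q ^ 2 : ℕ))} := by
  rintro x ⟨p, hp⟩
  have hq2 : (2 : ℝ) ≤ q := mod_cast hq
  have hq0 : (0 : ℝ) < q := two_pos.trans_le hq2
  refine ⟨q ^ n * p, ?_⟩
  calc |(q : ℝ) ^ (n + 1) * x - ((q ^ n * p : ℤ) : ℝ)| = q ^ (n + 1) * |x - p / q| := by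
        rw [← abs_of_pos (pow_pos hq0 (n + 1)), ← abs_mul, abs_of_pos (pow_pos hq0 (n + 1))]
        push_cast
        congr 1
        field_simp
        ring
    _ ≤ q ^ (n + 1) * (1 / q ^ (n + 6)) := by gcongr
    _ = 1 / (q ^ 3 * q ^ 2) := by
        field_simp
        ring
    _ ≤ 1 / (6 * (q ^ 2 : ℕ)) := by
        push_cast
        gcongr
        calc (6 : ℝ) ≤ 2 ^ 3 := by norm_num
          _ ≤ (q : ℝ) ^ 3 := by gcongr

lemma isBigO_measureReal_nearRat {n : ℕ} {K : ℝ}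
    (h : ∀ᶠ q : ℕ in atTop, ∀ ξ : ℝ, (q : ℝ) ^ (n + 1) ≤ |ξ| → ‖fourierT μ ξ‖ ≤ K / q ^ 2) :
    (fun q ↦ μ.real (nearRat (n + 6) q)) =O[atTop] fun q : ℕ ↦ 1 / (q : ℝ) ^ 2 := by
  refine .of_bound (4 * (μ.real univ + K)) ?_
  filter_upwards [h, eventually_ge_atTop 2] with q hdecay hq
  rw [Real.norm_of_nonneg measureReal_nonneg, Real.norm_of_nonneg (by positivity)]
  calc μ.real (nearRat (n + 6) q)
      ≤ 4 * (μ.real univ / (q ^ 2 : ℕ) + K / q ^ 2) :=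
        (measureReal_mono (nearRat_add_six_subset hq)).trans <|
          measureReal_abs_mul_sub_intCast_le (by positivity) (by positivity) hdecay
    _ = 4 * (μ.real univ + K) * (1 / (q : ℝ) ^ 2) := by
        push_cast
        ring

end FiniteMeasure

lemma eventually_norm_le_div_sq_of_isBigO {F : Type*} [NormedAddCommGroup F] {g : ℝ → F} {α : ℝ}
    (hα : 0 < α) (hg : g =O[Bornology.cobounded ℝ] fun ξ ↦ |ξ| ^ (-α)) :
    ∃ (n : ℕ) (K : ℝ), ∀ᶠ q : ℕ in atTop,
      ∀ ξ : ℝ, (q : ℝ) ^ (n + 1) ≤ |ξ| → ‖g ξ‖ ≤ K / q ^ 2 := by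
  obtain ⟨n, hn⟩ := exists_nat_ge (2 / α)
  obtain ⟨K, hK, hgK⟩ := hg.exists_nonneg
  obtain ⟨M, -, hM⟩ := hasBasis_cobounded_norm.eventually_iff.1 hgK.bound
  refine ⟨n, K, ?_⟩
  filter_upwards [eventually_ge_atTop 1, tendsto_natCast_atTop_atTop.eventually_ge_atTop M]
    with q hq hMq ξ hξ
  have hq1 : (1 : ℝ) ≤ q := mod_cast hq
  have exponent_le : (n + 1 : ℕ) * -α ≤ -2 := by
    push_cast
    linarith [(div_le_iff₀ hα).1 hn]
  have rpow_le : |ξ| ^ (-α) ≤ 1 / (q : ℝ) ^ 2 :=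
    calc |ξ| ^ (-α) ≤ ((q : ℝ) ^ (n + 1)) ^ (-α) :=
          Real.rpow_le_rpow_of_nonpos (by positivity) hξ (neg_nonpos.2 hα.le)
      _ = (q : ℝ) ^ ((n + 1 : ℕ) * -α) := (Real.rpow_natCast_mul (by positivity) _ _).symm
      _ ≤ (q : ℝ) ^ (-2 : ℝ) := Real.rpow_le_rpow_of_exponent_le hq1 exponent_le
      _ = 1 / (q : ℝ) ^ 2 := by rw [Real.rpow_neg (by positivity), Real.rpow_two, one_div]
  calc ‖g ξ‖ ≤ K * ‖|ξ| ^ (-α)‖ := hM ((hMq.trans (le_self_pow₀ hq1 n.succ_ne_zero)).trans hξ)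
    _ = K * |ξ| ^ (-α) := by rw [Real.norm_of_nonneg (by positivity)]
    _ ≤ K / q ^ 2 := by
        rw [div_eq_mul_one_div]
        gcongr

theorem ae_not_liouville_of_isBigO_fourierT {μ : Measure ℝ} [IsFiniteMeasure μ] {α : ℝ}
    (hα : 0 < α) (h : fourierT μ =O[Bornology.cobounded ℝ] fun ξ ↦ |ξ| ^ (-α)) :
    ∀ᵐ x ∂μ, ¬ Liouville x := by
  obtain ⟨n, K, hdecay⟩ := eventually_norm_le_div_sq_of_isBigO hα h
  exact ae_not_liouville_of_summable <| summable_of_isBigO_nat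
    (Real.summable_one_div_nat_pow.2 one_lt_two) (isBigO_measureReal_nearRat hdecay)

theorem stmt1_general {f : ℝ → ℝ} {α c M : ℝ} (hα : 0 < α) (hc : 0 < c)
    (hf : ∀ ξ, M ≤ ξ → c * f ξ ≤ ξ ^ (-α)) {μ : Measure ℝ} [IsFiniteMeasure μ] {C M' : ℝ}
    (hC : 0 ≤ C) (hμ : ∀ ξ : ℝ, M' ≤ |ξ| → ‖fourierT μ ξ‖ ≤ C * f |ξ|) :
    ∀ᵐ x ∂μ, ¬ Liouville x := by
  refine ae_not_liouville_of_isBigO_fourierT hα (.of_bound (C / c) ?_)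
  filter_upwards [tendsto_norm_cobounded_atTop.eventually_ge_atTop M,
    tendsto_norm_cobounded_atTop.eventually_ge_atTop M'] with ξ hMξ hM'ξ
  calc ‖fourierT μ ξ‖ ≤ C * f |ξ| := hμ ξ hM'ξ
    _ = C / c * (c * f |ξ|) := by field_simp
    _ ≤ C / c * |ξ| ^ (-α) := by gcongr; exact hf _ hMξ
    _ ≤ C / c * ‖|ξ| ^ (-α)‖ := by gcongr; exact Real.le_norm_self _

theorem stmt1 (f : ℝ → ℝ)
    (hf_nonneg : ∀ ξ, 0 ≤ ξ → 0 ≤ f ξ)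
    (hf_bdd : ∃ B : ℝ, ∀ ξ, 0 ≤ ξ → f ξ ≤ B)
    (hf_reg : AntitoneOn f (Ici 0) ∨ ContinuousOn f (Ici 0))
    (hdecay : ∃ α₀ > (0 : ℝ), ∃ c > (0 : ℝ), ∃ M > (0 : ℝ),
      ∀ ξ, M ≤ ξ → c * f ξ ≤ ξ ^ (-α₀)) :
    ¬ ∃ μ : Measure ℝ, IsProbabilityMeasure μ ∧ μ {x : ℝ | Liouville x}ᶜ = 0 ∧
      ∃ C > (0 : ℝ), ∃ M' > (0 : ℝ),
        ∀ ξ : ℝ, M' ≤ |ξ| → ‖fourierT μ ξ‖ ≤ C * f |ξ| := by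
  obtain ⟨α, hα, c, hc, M, -, hf⟩ := hdecay
  rintro ⟨μ, _, hL, C, hC, M', -, hμ⟩
  exact ((stmt1_general hα hc hf hC.le hμ).and (mem_ae_iff.2 hL)).exists.elim fun _ h ↦ h.1 h.2
end

section
/- Let f : [0,∞) → ℝ satisfy 0 < f(ξ) ≤ 1/2 for all ξ, and suppose the function φ(γ) = −log f(e^γ) is concave on [0,∞). Then exactly one of the following holds: (a) for every α > 0 and every ε > 0 there exists M > 0 with ξ^(−α) ≤ ε·f(ξ) for all ξ ≥ M; or (b) there exist α₀ > 0, c > 0, M > 0 with c·f(ξ) ≤ ξ^(−α₀) for all ξ ≥ M. -/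
open Filter Set

/-!
Put `φ γ = -log (f (exp γ))`. By concavity the slope of the chord of `φ` from `0` to `γ` is
antitone in `γ`. Either all these slopes are at least some `β > 0`, so that `φ` grows at least
linearly and `f` is `O(ξ ^ (-β))`, or they are eventually below every positive number, so that `φ`
grows sublinearly and `f` decays more slowly than every negative power.
-/

open Asymptotics

/-- Slow decay of `f`: the condition `limsup ξ ^ (-α) / f ξ = 0` as `ξ → +∞`, for every `α > 0`.
It is encoded as a little-o relation, which avoids dividing by `f ξ` and depends only on `|f|`. -/
def SlowDecay (f : ℝ → ℝ) : Prop :=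
  ∀ α > (0 : ℝ), (fun ξ => ξ ^ (-α)) =o[atTop] f

/-- Fast decay of `f`: the condition `liminf ξ ^ (-α) / f ξ > 0` as `ξ → +∞`, for some `α > 0`.
It is encoded as a big-O relation, which avoids dividing by `f ξ` and depends only on `|f|`. -/
def FastDecay (f : ℝ → ℝ) : Prop :=
  ∃ α > (0 : ℝ), f =O[atTop] fun ξ => ξ ^ (-α)

theorem eventually_atTop_iff_exists_gt {ι : Type*} [LinearOrder ι] [NoMaxOrder ι] (a : ι)
    {p : ι → Prop} : (∀ᶠ x in atTop, p x) ↔ ∃ M > a, ∀ x, M ≤ x → p x := by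
  have : Nonempty ι := ⟨a⟩
  refine ⟨fun h => ?_, fun ⟨M, _, hM⟩ => eventually_atTop.2 ⟨M, hM⟩⟩
  obtain ⟨M, hM⟩ := eventually_atTop.1 (h.and (eventually_gt_atTop a))
  exact ⟨M, (hM M le_rfl).2, fun x hx => (hM x hx).1⟩

theorem eventually_atTop_iff_eventually_exp {p : ℝ → Prop} :
    (∀ᶠ ξ in atTop, p ξ) ↔ ∀ᶠ γ in atTop, p (Real.exp γ) := by
  rw [← eventually_map (m := Real.exp), Real.map_exp_atTop]

section LinearGrowth

variable {𝕜 : Type*} [Field 𝕜] [LinearOrder 𝕜] [IsStrictOrderedRing 𝕜] {φ : 𝕜 → 𝕜} {a : 𝕜}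

theorem eventually_le_mul_add_of_eventually_slope_le
    (h : ∀ β > 0, ∀ᶠ γ in atTop, slope φ a γ ≤ β) {β : 𝕜} (hβ : 0 < β) (C : 𝕜) :
    ∀ᶠ γ in atTop, φ γ ≤ β * γ + C := by
  filter_upwards [h (β / 2) (half_pos hβ), eventually_gt_atTop a,
    eventually_ge_atTop ((φ a - β / 2 * a - C) / (β / 2))] with γ hslope hγ hlarge
  rw [slope_def_field, div_le_iff₀ (sub_pos.2 hγ)] at hslope
  rw [div_le_iff₀ (half_pos hβ)] at hlarge
  linarith

theorem eventually_mul_add_le_of_forall_le_slope {β : 𝕜} (h : ∀ γ > a, β ≤ slope φ a γ) :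
    ∀ᶠ γ in atTop, β * γ + (φ a - β * a) ≤ φ γ := by
  filter_upwards [eventually_gt_atTop a] with γ hγ
  have hslope := h γ hγ
  rw [slope_def_field, le_div_iff₀ (sub_pos.2 hγ)] at hslope
  linarith

theorem eventually_slope_le_of_concaveOn (hφ : ConcaveOn 𝕜 (Ici a) φ) {β γ₀ : 𝕜} (hγ₀ : a < γ₀)
    (h : slope φ a γ₀ ≤ β) : ∀ᶠ γ in atTop, slope φ a γ ≤ β := by
  filter_upwards [eventually_ge_atTop γ₀] with γ hγ
  have ha : a < γ := hγ₀.trans_le hγ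
  exact (hφ.antitoneOn_slope_gt self_mem_Ici ⟨hγ₀.le, hγ₀⟩ ⟨ha.le, ha⟩ hγ).trans h

theorem sublinear_or_linear_growth_of_concaveOn (hφ : ConcaveOn 𝕜 (Ici a) φ) :
    (∀ β > 0, ∀ C, ∀ᶠ γ in atTop, φ γ ≤ β * γ + C) ∨
      ∃ β > 0, ∃ C, ∀ᶠ γ in atTop, β * γ + C ≤ φ γ := by
  by_cases h : ∃ β > 0, ∀ γ > a, β ≤ slope φ a γ
  · obtain ⟨β, hβ, hslope⟩ := h
    exact .inr ⟨β, hβ, _, eventually_mul_add_le_of_forall_le_slope hslope⟩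
  · push Not at h
    refine .inl fun β => eventually_le_mul_add_of_eventually_slope_le (a := a) fun δ hδ => ?_
    obtain ⟨γ₀, hγ₀, hslope⟩ := h δ hδ
    exact eventually_slope_le_of_concaveOn hφ hγ₀ hslope.le

end LinearGrowth

section Decay

variable {f : ℝ → ℝ}

theorem slowDecay_iff_eventually_le (hf : ∀ᶠ ξ in atTop, 0 ≤ f ξ) :
    SlowDecay f ↔ ∀ α > (0 : ℝ), ∀ ε > (0 : ℝ), ∀ᶠ ξ in atTop, ξ ^ (-α) ≤ ε * f ξ := by
  refine forall₂_congr fun α _ => isLittleO_iff.trans (forall₂_congr fun ε _ => eventually_congr ?_)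
  filter_upwards [hf, eventually_ge_atTop 0] with ξ hfξ hξ
  rw [Real.norm_of_nonneg (Real.rpow_nonneg hξ _), Real.norm_of_nonneg hfξ]

theorem fastDecay_iff_eventually_le (hf : ∀ᶠ ξ in atTop, 0 ≤ f ξ) :
    FastDecay f ↔ ∃ α > (0 : ℝ), ∃ c > (0 : ℝ), ∀ᶠ ξ in atTop, c * f ξ ≤ ξ ^ (-α) := by
  refine exists_congr fun α => and_congr_right fun _ =>
    isBigO_iff''.trans (exists_congr fun c => and_congr_right fun _ => eventually_congr ?_)
  filter_upwards [hf, eventually_ge_atTop 0] with ξ hfξ hξ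
  rw [Real.norm_of_nonneg (Real.rpow_nonneg hξ _), Real.norm_of_nonneg hfξ]

theorem FastDecay.not_slowDecay (hf : ∃ᶠ ξ in atTop, f ξ ≠ 0) (h : FastDecay f) :
    ¬ SlowDecay f :=
  let ⟨α, hα, hO⟩ := h
  fun hslow => hO.not_isLittleO hf (hslow α hα)

theorem exp_rpow_neg_le_exp_mul_iff {y : ℝ} (hy : 0 < y) (α γ C : ℝ) :
    Real.exp γ ^ (-α) ≤ Real.exp C * y ↔ -Real.log y ≤ α * γ + C := by
  rw [← Real.exp_mul, ← Real.le_log_iff_exp_le (by positivity),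
    Real.log_mul (Real.exp_ne_zero C) hy.ne', Real.log_exp]
  constructor <;> intro h <;> linarith

theorem exp_mul_le_exp_rpow_neg_iff {y : ℝ} (hy : 0 < y) (α γ C : ℝ) :
    Real.exp C * y ≤ Real.exp γ ^ (-α) ↔ α * γ + C ≤ -Real.log y := by
  rw [← Real.exp_mul, ← Real.log_le_iff_le_exp (by positivity),
    Real.log_mul (Real.exp_ne_zero C) hy.ne', Real.log_exp]
  constructor <;> intro h <;> linarith

theorem slowDecay_of_neg_log_le (hf : ∀ᶠ ξ in atTop, 0 < f ξ)
    (h : ∀ α > 0, ∀ C, ∀ᶠ γ in atTop, -Real.log (f (Real.exp γ)) ≤ α * γ + C) :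
    SlowDecay f := by
  refine (slowDecay_iff_eventually_le (hf.mono fun _ => le_of_lt)).2 fun α hα ε hε => ?_
  rw [eventually_atTop_iff_eventually_exp] at hf ⊢
  filter_upwards [hf, h α hα (Real.log ε)] with γ hfγ hγ
  rwa [← exp_rpow_neg_le_exp_mul_iff hfγ, Real.exp_log hε] at hγ

theorem fastDecay_of_le_neg_log (hf : ∀ᶠ ξ in atTop, 0 < f ξ) {α C : ℝ} (hα : 0 < α)
    (h : ∀ᶠ γ in atTop, α * γ + C ≤ -Real.log (f (Real.exp γ))) :
    FastDecay f := by
  refine (fastDecay_iff_eventually_le (hf.mono fun _ => le_of_lt)).2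
    ⟨α, hα, Real.exp C, Real.exp_pos C, ?_⟩
  rw [eventually_atTop_iff_eventually_exp] at hf ⊢
  filter_upwards [hf, h] with γ hfγ hγ
  exact (exp_mul_le_exp_rpow_neg_iff hfγ α γ C).2 hγ

theorem slowDecay_or_fastDecay_of_concaveOn {a : ℝ} (hf : ∀ᶠ ξ in atTop, 0 < f ξ)
    (hφ : ConcaveOn ℝ (Ici a) fun γ => -Real.log (f (Real.exp γ))) :
    SlowDecay f ∨ FastDecay f :=
  (sublinear_or_linear_growth_of_concaveOn hφ).imp (slowDecay_of_neg_log_le hf)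
    fun ⟨_, hα, _, h⟩ => fastDecay_of_le_neg_log hf hα h

end Decay

theorem stmt6_general (f : ℝ → ℝ)
    (hf : ∀ ξ, 1 ≤ ξ → 0 < f ξ)
    (hφ_concave : ConcaveOn ℝ (Ici 0) (fun γ : ℝ => -Real.log (f (Real.exp γ)))) :
    ((∀ α > (0 : ℝ), ∀ ε > (0 : ℝ), ∃ M > (0 : ℝ),
        ∀ ξ, M ≤ ξ → ξ ^ (-α) ≤ ε * f ξ) ∨
     (∃ α₀ > (0 : ℝ), ∃ c > (0 : ℝ), ∃ M > (0 : ℝ),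
        ∀ ξ, M ≤ ξ → c * f ξ ≤ ξ ^ (-α₀))) ∧
    ¬ ((∀ α > (0 : ℝ), ∀ ε > (0 : ℝ), ∃ M > (0 : ℝ),
        ∀ ξ, M ≤ ξ → ξ ^ (-α) ≤ ε * f ξ) ∧
       (∃ α₀ > (0 : ℝ), ∃ c > (0 : ℝ), ∃ M > (0 : ℝ),
        ∀ ξ, M ≤ ξ → c * f ξ ≤ ξ ^ (-α₀))) := by
  have hf_pos : ∀ᶠ ξ in atTop, 0 < f ξ := eventually_atTop.2 ⟨1, hf⟩
  have hf_nonneg : ∀ᶠ ξ in atTop, 0 ≤ f ξ := hf_pos.mono fun _ => le_of_lt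
  have hf_ne : ∃ᶠ ξ in atTop, f ξ ≠ 0 := (hf_pos.mono fun _ h => h.ne').frequently
  simp only [← eventually_atTop_iff_exists_gt]
  rw [← slowDecay_iff_eventually_le hf_nonneg, ← fastDecay_iff_eventually_le hf_nonneg]
  exact ⟨slowDecay_or_fastDecay_of_concaveOn hf_pos hφ_concave,
    fun ⟨hslow, hfast⟩ => hfast.not_slowDecay hf_ne hslow⟩

theorem stmt6 (f : ℝ → ℝ)
    (hf : ∀ ξ, 0 ≤ ξ → 0 < f ξ ∧ f ξ ≤ 1 / 2)
    (hφ_concave : ConcaveOn ℝ (Ici 0) (fun γ : ℝ => -Real.log (f (Real.exp γ)))) :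
    ((∀ α > (0 : ℝ), ∀ ε > (0 : ℝ), ∃ M > (0 : ℝ),
        ∀ ξ, M ≤ ξ → ξ ^ (-α) ≤ ε * f ξ) ∨
     (∃ α₀ > (0 : ℝ), ∃ c > (0 : ℝ), ∃ M > (0 : ℝ),
        ∀ ξ, M ≤ ξ → c * f ξ ≤ ξ ^ (-α₀))) ∧
    ¬ ((∀ α > (0 : ℝ), ∀ ε > (0 : ℝ), ∃ M > (0 : ℝ),
        ∀ ξ, M ≤ ξ → ξ ^ (-α) ≤ ε * f ξ) ∧
       (∃ α₀ > (0 : ℝ), ∃ c > (0 : ℝ), ∃ M > (0 : ℝ),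
        ∀ ξ, M ≤ ξ → c * f ξ ≤ ξ ^ (-α₀))) :=
  stmt6_general f (fun ξ hξ => (hf ξ (zero_le_one.trans hξ)).1) hφ_concave
end

section
/- Let f : [0,∞) → ℝ be antitone with 0 < f(ξ) ≤ 1/2 for all ξ, and suppose f is not constant on [1,∞). If the function φ(γ) = −log f(e^γ) is convex on [0,∞), then there is no Borel probability measure μ on ℝ with μ(ℝ \ 𝕃) = 0 for which there exist C > 0, M > 0 with |μ̂(ξ)| ≤ C·f(|ξ|) for all |ξ| ≥ M. -/
open MeasureTheory Filter Set

/-!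
Convexity makes `φ` grow at least linearly, so `f`, and with it `μ̂`, decays like a power
`|ξ|^(-c)`, where we may take `c < 1`. Pairing `μ̂` with a Gaussian of width `1 / r` turns this
decay into the ball condition `μ(B(x, r)) ≤ K r^c`. The points of `[-R, R]` within `q^(-p)` of a
fraction with denominator `q` are covered by `O(q)` balls of radius `q^(-p)`, hence form a set of
measure `O(q^(1 - pc))`. This is summable as soon as `p > 2 / c`, and Borel–Cantelli shows that
`μ`-almost no `x` satisfies the Liouville condition with exponent larger than `p`.
-/

open Metric ProbabilityTheory Asymptotics
open scoped NNReal ENNReal RealInnerProductSpace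

section BallCondition

/-- The ball condition of exponent `s`, as in Frostman's lemma: balls of radius `r` have measure at
most a constant times `r ^ s`, uniformly in the centre. It links Fourier decay to approximation
by rationals. It is imposed at all radii `r > 0`, not just small ones; for finite measures and
`s ≥ 0` this only changes the constant. -/
def BallCondition {X : Type*} [PseudoMetricSpace X] [MeasurableSpace X]
    (μ : Measure X) (s : ℝ) : Prop :=
  ∃ K : ℝ≥0, ∀ x, ∀ r > 0, μ (ball x r) ≤ ENNReal.ofReal (K * r ^ s)

variable {μ : Measure ℝ}

lemma measure_setOf_exists_abs_sub_div_lt_le {δ : ℝ} {B : ℝ≥0∞} (hδ : δ ≤ 1)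
    (hB : ∀ x, μ (ball x δ) ≤ B) (R : ℕ) {n : ℕ} (hn : 0 < n) :
    μ {x | |x| ≤ R ∧ ∃ m : ℤ, |x - m / n| < δ} ≤ (2 * ((R + 1) * n) + 1 : ℕ) * B := by
  have hn' : (0 : ℝ) < n := Nat.cast_pos.2 hn
  set I : Finset ℤ := Finset.Icc (-((R + 1) * n : ℕ)) ((R + 1) * n : ℕ)
  have card_I : I.card = 2 * ((R + 1) * n) + 1 := by
    rw [Int.card_Icc]
    omega
  have cover : {x : ℝ | |x| ≤ R ∧ ∃ m : ℤ, |x - m / n| < δ} ⊆ ⋃ m ∈ I, ball (m / n : ℝ) δ := by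
    rintro x ⟨hx, m, hm⟩
    have m_div_le : |(m : ℝ) / n| ≤ R + 1 := by
      have := abs_sub_abs_le_abs_sub (m / n : ℝ) x
      rw [abs_sub_comm] at this
      linarith
    have m_mem : m ∈ I := by
      rw [abs_div, abs_of_pos hn', div_le_iff₀ hn'] at m_div_le
      rw [Finset.mem_Icc, ← abs_le]
      exact_mod_cast m_div_le
    exact mem_biUnion m_mem (by rwa [mem_ball, Real.dist_eq])
  calc μ {x | |x| ≤ R ∧ ∃ m : ℤ, |x - m / n| < δ}
      ≤ ∑ m ∈ I, μ (ball (m / n : ℝ) δ) :=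
        (measure_mono cover).trans (measure_biUnion_finset_le _ _)
    _ ≤ I.card • B := Finset.sum_le_card_nsmul _ _ _ fun m _ ↦ hB _
    _ = (2 * ((R + 1) * n) + 1 : ℕ) * B := by rw [card_I, nsmul_eq_mul]

lemma ae_eventually_not_exists_abs_sub_div_lt {s q : ℝ} (hμ : BallCondition μ s) (hq : 0 < q)
    (hqs : 2 < q * s) (R : ℕ) :
    ∀ᵐ x : ℝ ∂μ, ∀ᶠ n : ℕ in atTop, ¬(|x| ≤ R ∧ ∃ m : ℤ, |x - m / n| < (n : ℝ) ^ (-q)) := by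
  obtain ⟨K, hK⟩ := hμ
  set S : ℕ → Set ℝ := fun n ↦ {x | |x| ≤ R ∧ ∃ m : ℤ, |x - m / n| < (n : ℝ) ^ (-q)}
  have measure_S_le (n : ℕ) :
      μ (S n) ≤ ENNReal.ofReal ((2 * R + 3) * K * (n : ℝ) ^ (1 - q * s)) := by
    rcases n.eq_zero_or_pos with rfl | hn
    · have S_zero : S 0 = ∅ := by
        refine eq_empty_of_forall_notMem fun x ⟨_, m, hm⟩ ↦ ?_
        rw [Nat.cast_zero, Real.zero_rpow (neg_ne_zero.2 hq.ne')] at hm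
        exact (abs_nonneg _).not_gt hm
      simp only [S_zero, measure_empty, zero_le]
    have one_le_n : (1 : ℝ) ≤ n := Nat.one_le_cast.2 hn
    have hn' : (0 : ℝ) < n := Nat.cast_pos.2 hn
    have count_le : ((2 * ((R + 1) * n) + 1 : ℕ) : ℝ) ≤ (2 * R + 3) * n := by
      push_cast
      linarith
    calc μ (S n)
        ≤ (2 * ((R + 1) * n) + 1 : ℕ) * ENNReal.ofReal (K * ((n : ℝ) ^ (-q)) ^ s) :=
          measure_setOf_exists_abs_sub_div_lt_le
            (Real.rpow_le_one_of_one_le_of_nonpos one_le_n (neg_nonpos.2 hq.le))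
            (fun x ↦ hK x _ (Real.rpow_pos_of_pos hn' _)) R hn
      _ = ENNReal.ofReal ((2 * ((R + 1) * n) + 1 : ℕ) * (K * ((n : ℝ) ^ (-q)) ^ s)) := by
          rw [ENNReal.ofReal_mul (Nat.cast_nonneg _), ENNReal.ofReal_natCast]
      _ ≤ ENNReal.ofReal ((2 * R + 3) * n * (K * ((n : ℝ) ^ (-q)) ^ s)) := by gcongr
      _ = ENNReal.ofReal ((2 * R + 3) * K * (n : ℝ) ^ (1 - q * s)) := by
          rw [← Real.rpow_mul hn'.le, neg_mul, sub_eq_add_neg, Real.rpow_add hn', Real.rpow_one]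
          ring_nf
  have summable_bound : Summable fun n : ℕ ↦ (2 * R + 3) * K * (n : ℝ) ^ (1 - q * s) :=
    (Real.summable_nat_rpow.2 (by linarith)).mul_left _
  exact ae_eventually_notMem (s := S) <|
    ne_top_of_le_ne_top summable_bound.tsum_ofReal_ne_top (ENNReal.tsum_le_tsum measure_S_le)

theorem BallCondition.ae_not_liouvilleWith {s p : ℝ} (hμ : BallCondition μ s) (hs : 0 < s)
    (hp : 2 / s < p) : ∀ᵐ x ∂μ, ¬LiouvilleWith p x := by
  obtain ⟨q, hsq, hqp⟩ := exists_between hp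
  have hq : 0 < q := (by positivity : 0 < 2 / s).trans hsq
  filter_upwards [ae_all_iff.2 (ae_eventually_not_exists_abs_sub_div_lt hμ hq
    ((div_lt_iff₀ hs).1 hsq))] with x hx hxp
  obtain ⟨R, hR⟩ := exists_nat_ge |x|
  obtain ⟨n, ⟨m, -, hm⟩, hn⟩ :=
    ((hxp.frequently_lt_rpow_neg hqp).and_eventually (hx R)).exists
  exact hn ⟨hR, m, hm⟩

end BallCondition

section FourierDecay

lemma charFun_eq_fourierT (μ : Measure ℝ) (t : ℝ) :
    charFun μ t = fourierT μ (-(2 * Real.pi)⁻¹ * t) := by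
  rw [charFun_apply_real, fourierT]
  congr! 3 with x
  push_cast
  field_simp

lemma charFun_isBigO_of_fourierT_isBigO {μ : Measure ℝ} {c : ℝ}
    (hμ : fourierT μ =O[cocompact ℝ] fun ξ ↦ |ξ| ^ (-c)) :
    charFun μ =O[cocompact ℝ] fun t ↦ |t| ^ (-c) := by
  have scaling : Tendsto (fun t ↦ -(2 * Real.pi)⁻¹ * t) (cocompact ℝ) (cocompact ℝ) :=
    tendsto_cocompact_mul_left₀ (by simp [Real.pi_ne_zero])
  refine .of_const_mul_right (c := |-(2 * Real.pi)⁻¹| ^ (-c)) ?_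
  simpa only [Function.comp_def, ← charFun_eq_fourierT, abs_mul,
    Real.mul_rpow (abs_nonneg _) (abs_nonneg _)] using hμ.comp_tendsto scaling

lemma integral_charFun_comm {E : Type*} [NormedAddCommGroup E] [InnerProductSpace ℝ E]
    [MeasurableSpace E] [BorelSpace E] [SecondCountableTopology E] (μ ν : Measure E)
    [IsFiniteMeasure μ] [IsFiniteMeasure ν] :
    ∫ t, charFun μ t ∂ν = ∫ x, charFun ν x ∂μ := by
  have integrable_char : Integrable
      (Function.uncurry fun t x : E ↦ Complex.exp (⟪x, t⟫ * Complex.I)) (ν.prod μ) :=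
    (integrable_const (1 : ℝ)).mono' (by fun_prop) <|
      .of_forall fun z ↦ (Complex.norm_exp_ofReal_mul_I _).le
  simp only [charFun_apply]
  rw [integral_integral_swap integrable_char]
  simp only [real_inner_comm]

lemma integrable_abs_rpow_gaussianReal {s : ℝ} (hs : -1 < s) {v : ℝ≥0} (hv : v ≠ 0) :
    Integrable (fun t : ℝ ↦ |t| ^ s) (gaussianReal 0 v) := by
  have hb : 0 < (2 * v : ℝ)⁻¹ := by positivity
  have integrable_volume :
      Integrable fun t : ℝ ↦ |t| ^ s * Real.exp (-(2 * v : ℝ)⁻¹ * |t| ^ 2) := by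
    refine (integrable_fun_norm_addHaar volume
      (f := fun t : ℝ ↦ t ^ s * Real.exp (-(2 * v : ℝ)⁻¹ * t ^ 2))).2 ?_
    simpa using integrableOn_rpow_mul_exp_neg_mul_sq hb hs
  rw [gaussianReal_of_var_ne_zero 0 hv, integrable_withDensity_iff_integrable_smul'
    (measurable_gaussianPDF 0 v) (ae_of_all _ fun _ ↦ gaussianPDF_lt_top)]
  refine (integrable_volume.const_mul (√(2 * Real.pi * v))⁻¹).congr (ae_of_all _ fun t ↦ ?_)
  simp only [toReal_gaussianPDF, gaussianPDFReal_def, sub_zero, smul_eq_mul, sq_abs]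
  ring_nf

lemma measureReal_ball_zero_one_le_integral_norm_charFun (μ : Measure ℝ) [IsFiniteMeasure μ] :
    μ.real (ball 0 1) ≤ Real.exp (1 / 2) * ∫ t, ‖charFun μ t‖ ∂gaussianReal 0 1 := by
  have charFun_gaussian (x : ℝ) :
      charFun (gaussianReal 0 1) x = (Real.exp (-x ^ 2 / 2) : ℝ) := by
    simp [charFun_gaussianReal, neg_div]
  have integrable_gaussian : Integrable (fun x : ℝ ↦ Real.exp (-x ^ 2 / 2)) μ := by
    refine (integrable_const (1 : ℝ)).mono' (by fun_prop) (.of_forall fun x ↦ ?_)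
    rw [Real.norm_of_nonneg (Real.exp_nonneg _), Real.exp_le_one_iff]
    linarith [sq_nonneg x]
  have ball_subset : ball 0 1 ⊆ {x : ℝ | Real.exp (-(1 / 2)) ≤ Real.exp (-x ^ 2 / 2)} := by
    intro x hx
    have : x ^ 2 ≤ 1 := (sq_le_one_iff_abs_le_one x).2 (mem_ball_zero_iff.1 hx).le
    exact Real.exp_le_exp.2 (by linarith)
  have key : Real.exp (-(1 / 2)) * μ.real (ball 0 1) ≤ ∫ t, ‖charFun μ t‖ ∂gaussianReal 0 1 :=
    calc Real.exp (-(1 / 2)) * μ.real (ball 0 1)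
        ≤ Real.exp (-(1 / 2)) * μ.real {x | Real.exp (-(1 / 2)) ≤ Real.exp (-x ^ 2 / 2)} := by
          gcongr
          finiteness
      _ ≤ ∫ x, Real.exp (-x ^ 2 / 2) ∂μ :=
          mul_meas_ge_le_integral_of_nonneg (.of_forall fun x ↦ Real.exp_nonneg _)
            integrable_gaussian _
      _ ≤ ‖∫ x, charFun (gaussianReal 0 1) x ∂μ‖ := by
          simp only [charFun_gaussian, integral_complex_ofReal, Complex.norm_real]
          exact Real.le_norm_self _
      _ = ‖∫ t, charFun μ t ∂gaussianReal 0 1‖ := by rw [integral_charFun_comm]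
      _ ≤ ∫ t, ‖charFun μ t‖ ∂gaussianReal 0 1 := norm_integral_le_integral_norm _
  rwa [Real.exp_neg, inv_mul_le_iff₀ (Real.exp_pos _)] at key

variable {μ : Measure ℝ} [IsFiniteMeasure μ]

lemma measureReal_ball_le_integral_norm_charFun (x : ℝ) {r : ℝ} (hr : 0 < r) :
    μ.real (ball x r) ≤
      Real.exp (1 / 2) * ∫ t, ‖charFun μ (r⁻¹ * t)‖ ∂gaussianReal 0 1 := by
  set μ' : Measure ℝ := (μ.map (· + -x)).map (r⁻¹ * ·)
  have preimage_ball : (· + -x) ⁻¹' ((r⁻¹ * ·) ⁻¹' ball 0 1) = ball x r := by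
    ext y
    simp [Real.dist_eq, abs_of_pos hr, inv_mul_lt_one₀ hr, ← sub_eq_add_neg]
  have measureReal_ball : μ'.real (ball 0 1) = μ.real (ball x r) := by
    rw [map_measureReal_apply (by fun_prop) measurableSet_ball, map_measureReal_apply
      (by fun_prop) (measurableSet_preimage (by fun_prop) measurableSet_ball), preimage_ball]
  have norm_charFun (t : ℝ) : ‖charFun μ' t‖ = ‖charFun μ (r⁻¹ * t)‖ := by
    rw [charFun_map_mul, charFun_map_add_const, norm_mul, Complex.norm_exp_ofReal_mul_I, mul_one]
  simpa only [measureReal_ball, norm_charFun] using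
    measureReal_ball_zero_one_le_integral_norm_charFun μ'

lemma ballCondition_of_norm_charFun_le {c K : ℝ} (hc : c < 1)
    (hμ : ∀ t ≠ 0, ‖charFun μ t‖ ≤ K * |t| ^ (-c)) : BallCondition μ c := by
  set ν := gaussianReal 0 1
  have hK : 0 ≤ K := by simpa using (norm_nonneg _).trans (hμ 1 one_ne_zero)
  refine ⟨⟨Real.exp (1 / 2) * (K * ∫ t, |t| ^ (-c) ∂ν), by positivity⟩, fun x r hr ↦ ?_⟩
  have norm_charFun_le : ∀ᵐ t ∂ν, ‖charFun μ (r⁻¹ * t)‖ ≤ K * r ^ c * |t| ^ (-c) := by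
    have ae_ne_zero : ∀ᵐ t ∂ν, t ≠ 0 :=
      (gaussianReal_absolutelyContinuous 0 one_ne_zero).ae_le (Measure.ae_ne volume 0)
    filter_upwards [ae_ne_zero] with t ht
    calc ‖charFun μ (r⁻¹ * t)‖
        ≤ K * |r⁻¹ * t| ^ (-c) := hμ _ (mul_ne_zero (inv_ne_zero hr.ne') ht)
      _ = K * r ^ c * |t| ^ (-c) := by
          rw [abs_mul, abs_of_pos (inv_pos.2 hr), Real.mul_rpow (by positivity) (abs_nonneg t),
            Real.inv_rpow hr.le, Real.rpow_neg hr.le, inv_inv, mul_assoc]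
  have integral_le : ∫ t, ‖charFun μ (r⁻¹ * t)‖ ∂ν ≤ K * r ^ c * ∫ t, |t| ^ (-c) ∂ν := by
    rw [← integral_const_mul]
    exact integral_mono_of_nonneg (.of_forall fun t ↦ norm_nonneg _)
      ((integrable_abs_rpow_gaussianReal (by linarith) one_ne_zero).const_mul _) norm_charFun_le
  rw [← ofReal_measureReal]
  refine ENNReal.ofReal_le_ofReal ?_
  calc μ.real (ball x r)
      ≤ Real.exp (1 / 2) * ∫ t, ‖charFun μ (r⁻¹ * t)‖ ∂ν :=
        measureReal_ball_le_integral_norm_charFun x hr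
    _ ≤ Real.exp (1 / 2) * (K * r ^ c * ∫ t, |t| ^ (-c) ∂ν) := by gcongr
    _ = Real.exp (1 / 2) * (K * ∫ t, |t| ^ (-c) ∂ν) * r ^ c := by ring

lemma exists_forall_norm_le_mul_rpow_neg_of_isBigO {E : Type*} [SeminormedAddCommGroup E]
    {g : ℝ → E} {A c : ℝ} (hA : ∀ t, ‖g t‖ ≤ A) (hc : 0 ≤ c)
    (hg : g =O[cocompact ℝ] fun t ↦ |t| ^ (-c)) :
    ∃ K, ∀ t ≠ 0, ‖g t‖ ≤ K * |t| ^ (-c) := by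
  obtain ⟨B, hB⟩ := hg.bound
  obtain ⟨R, -, hR⟩ := (hasBasis_cobounded_norm (E := ℝ)).eventually_iff.1
    (cobounded_eq_cocompact (α := ℝ) ▸ hB)
  refine ⟨max B (A * R ^ c), fun t ht ↦ ?_⟩
  have abs_t_pos : 0 < |t| := abs_pos.2 ht
  rcases le_total R |t| with hRt | htR
  · calc ‖g t‖ ≤ B * ‖|t| ^ (-c)‖ := hR hRt
      _ = B * |t| ^ (-c) := by rw [Real.norm_of_nonneg (by positivity)]
      _ ≤ max B (A * R ^ c) * |t| ^ (-c) := by gcongr; exact le_max_left _ _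
  · have hA' : 0 ≤ A := (norm_nonneg _).trans (hA 0)
    calc ‖g t‖ ≤ A := hA t
      _ = A * |t| ^ c * |t| ^ (-c) := by
          rw [mul_assoc, ← Real.rpow_add abs_t_pos, add_neg_cancel, Real.rpow_zero, mul_one]
      _ ≤ A * R ^ c * |t| ^ (-c) := by gcongr
      _ ≤ max B (A * R ^ c) * |t| ^ (-c) := by gcongr; exact le_max_right _ _

theorem ae_not_liouvilleWith_of_charFun_isBigO {c p : ℝ} (hc₀ : 0 < c) (hc₁ : c < 1)
    (hμ : charFun μ =O[cocompact ℝ] fun t ↦ |t| ^ (-c)) (hp : 2 / c < p) :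
    ∀ᵐ x ∂μ, ¬LiouvilleWith p x := by
  obtain ⟨K, hK⟩ := exists_forall_norm_le_mul_rpow_neg_of_isBigO norm_charFun_le hc₀.le hμ
  exact (ballCondition_of_norm_charFun_le hc₁ hK).ae_not_liouvilleWith hc₀ hp

theorem ae_not_liouville_of_charFun_isBigO {c : ℝ} (hc : 0 < c)
    (hμ : charFun μ =O[cocompact ℝ] fun t ↦ |t| ^ (-c)) : ∀ᵐ x ∂μ, ¬Liouville x := by
  obtain ⟨c', hc'₀, hc'⟩ := exists_between (lt_min hc one_pos)
  obtain ⟨hc'c, hc'₁⟩ := lt_min_iff.1 hc'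
  have rpow_isBigO : (fun t : ℝ ↦ |t| ^ (-c)) =O[cocompact ℝ] fun t ↦ |t| ^ (-c') := by
    refine .of_norm_eventuallyLE ?_
    filter_upwards [tendsto_norm_cocompact_atTop.eventually_ge_atTop 1] with t ht
    rw [Real.norm_of_nonneg (by positivity)]
    exact Real.rpow_le_rpow_of_exponent_le ht (neg_le_neg hc'c.le)
  filter_upwards [ae_not_liouvilleWith_of_charFun_isBigO hc'₀ hc'₁ (hμ.trans rpow_isBigO)
    (lt_add_one _)] with x hx hL
  exact hx (hL.liouvilleWith _)

end FourierDecay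

section ConvexGrowth

lemma exists_pos_eventually_mul_add_le_of_convexOn {𝕜 : Type*} [Field 𝕜] [LinearOrder 𝕜]
    [IsStrictOrderedRing 𝕜] {g : 𝕜 → 𝕜} {x₀ a b : 𝕜} (hg : ConvexOn 𝕜 (Ici x₀) g) (ha : x₀ ≤ a)
    (hab : a < b) (hgab : g a < g b) :
    ∃ c > 0, ∃ d, ∀ᶠ y in atTop, c * y + d ≤ g y := by
  set c := (g b - g a) / (b - a)
  refine ⟨c, div_pos (sub_pos.2 hgab) (sub_pos.2 hab), g a - c * a, ?_⟩
  filter_upwards [eventually_gt_atTop b] with y hby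
  have slope_le : c ≤ (g y - g a) / (y - a) :=
    hg.secant_mono_aux2 ha (ha.trans (hab.trans hby).le) hab hby
  rw [le_div_iff₀ (sub_pos.2 (hab.trans hby))] at slope_le
  linarith

lemma exists_pos_isBigO_rpow_neg_of_convexOn_neg_log_comp_exp {f : ℝ → ℝ} {a b : ℝ}
    (hf : ∀ ξ, 1 ≤ ξ → 0 < f ξ)
    (hφ : ConvexOn ℝ (Ici 0) fun γ ↦ -Real.log (f (Real.exp γ)))
    (ha : 1 ≤ a) (hab : a < b) (hfab : f b < f a) :
    ∃ c : ℝ, 0 < c ∧ f =O[atTop] fun ξ ↦ ξ ^ (-c) := by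
  have ha₀ : 0 < a := one_pos.trans_le ha
  have hb : 1 ≤ b := ha.trans hab.le
  have hb₀ : 0 < b := one_pos.trans_le hb
  obtain ⟨c, hc, d, hcd⟩ := exists_pos_eventually_mul_add_le_of_convexOn hφ (Real.log_nonneg ha)
    (Real.log_lt_log ha₀ hab) <| by
      simpa only [Real.exp_log ha₀, Real.exp_log hb₀, neg_lt_neg_iff] using
        Real.log_lt_log (hf b hb) hfab
  refine ⟨c, hc, .of_bound (Real.exp (-d)) ?_⟩
  filter_upwards [Real.tendsto_log_atTop.eventually hcd, eventually_ge_atTop 1] with ξ hξ one_le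
  have hξ₀ : 0 < ξ := one_pos.trans_le one_le
  rw [Real.exp_log hξ₀] at hξ
  rw [Real.norm_of_nonneg (hf ξ one_le).le, Real.norm_of_nonneg (by positivity),
    Real.rpow_def_of_pos hξ₀, ← Real.exp_add, ← Real.log_le_iff_le_exp (hf ξ one_le)]
  linarith

lemma exists_lt_map_lt_of_antitoneOn {α β : Type*} [LinearOrder α] [PartialOrder β] {f : α → β}
    {s : Set α} (hf : AntitoneOn f s) {x y : α} (hx : x ∈ s) (hy : y ∈ s) (hxy : f x ≠ f y) :
    ∃ a ∈ s, ∃ b, a < b ∧ f b < f a := by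
  rcases lt_or_gt_of_ne (ne_of_apply_ne f hxy) with h | h
  · exact ⟨x, hx, y, h, (hf hx hy h.le).lt_of_ne hxy.symm⟩
  · exact ⟨y, hy, x, h, (hf hy hx h.le).lt_of_ne hxy⟩

end ConvexGrowth

theorem stmt8_general {f : ℝ → ℝ} (hf : ∀ ξ, 1 ≤ ξ → 0 < f ξ)
    (hf_decrease : ∃ a ∈ Ici (1 : ℝ), ∃ b, a < b ∧ f b < f a)
    (hφ_convex : ConvexOn ℝ (Ici 0) (fun γ : ℝ ↦ -Real.log (f (Real.exp γ))))
    {μ : Measure ℝ} [IsFiniteMeasure μ] {C M : ℝ}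
    (hμ : ∀ ξ : ℝ, M ≤ |ξ| → ‖fourierT μ ξ‖ ≤ C * f |ξ|) :
    ∀ᵐ x ∂μ, ¬Liouville x := by
  obtain ⟨a, ha, b, hab, hfab⟩ := hf_decrease
  obtain ⟨c, hc, f_isBigO⟩ :=
    exists_pos_isBigO_rpow_neg_of_convexOn_neg_log_comp_exp hf hφ_convex ha hab hfab
  have abs_tendsto : Tendsto (fun ξ : ℝ ↦ |ξ|) (cocompact ℝ) atTop := tendsto_norm_cocompact_atTop
  have fourierT_isBigO : fourierT μ =O[cocompact ℝ] fun ξ ↦ f |ξ| := by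
    refine .of_bound C ?_
    filter_upwards [abs_tendsto.eventually_ge_atTop M, abs_tendsto.eventually_ge_atTop 1]
      with ξ hM h1
    rw [Real.norm_of_nonneg (hf _ h1).le]
    exact hμ ξ hM
  exact ae_not_liouville_of_charFun_isBigO hc <| charFun_isBigO_of_fourierT_isBigO <|
    fourierT_isBigO.trans (f_isBigO.comp_tendsto abs_tendsto)

theorem stmt8 (f : ℝ → ℝ)
    (hf_anti : AntitoneOn f (Ici 0))
    (hf : ∀ ξ, 0 ≤ ξ → 0 < f ξ ∧ f ξ ≤ 1 / 2)
    (hf_nonconst : ∃ ξ₁ ξ₂ : ℝ, 1 ≤ ξ₁ ∧ 1 ≤ ξ₂ ∧ f ξ₁ ≠ f ξ₂)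
    (hφ_convex : ConvexOn ℝ (Ici 0) (fun γ : ℝ => -Real.log (f (Real.exp γ)))) :
    ¬ ∃ μ : Measure ℝ, IsProbabilityMeasure μ ∧ μ {x : ℝ | Liouville x}ᶜ = 0 ∧
      ∃ C > (0 : ℝ), ∃ M > (0 : ℝ),
        ∀ ξ : ℝ, M ≤ |ξ| → ‖fourierT μ ξ‖ ≤ C * f |ξ| := by
  rintro ⟨μ, _, hL, C, -, M, -, hμ⟩
  obtain ⟨ξ₁, ξ₂, h₁, h₂, hne⟩ := hf_nonconst
  have hf_decrease := exists_lt_map_lt_of_antitoneOn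
    (hf_anti.mono (Ici_subset_Ici.2 zero_le_one)) (mem_Ici.2 h₁) (mem_Ici.2 h₂) hne
  have ae_not := stmt8_general (fun ξ hξ ↦ (hf ξ (zero_le_one.trans hξ)).1) hf_decrease
    hφ_convex hμ
  obtain ⟨x, hx, hx'⟩ := ((ae_iff.2 hL : ∀ᵐ x ∂μ, Liouville x).and ae_not).exists
  exact hx' hx
end
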